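/- arXiv:1408.2137 — 5 statements merged into one kernel-verified Lean document; each statement's English description precedes it below -/
import Mathlib

section
/- Assume that X is a subspace of the Cantor set 2^ω that is h-homogeneously embedded in 2^ω and countably controlled. Then X is countable dense homogeneous. -/
/-- `X` is h-homogeneously embedded in `Z` if there is a π-base `ℬ` for `Z`
consisting of (non-empty) clopen sets, together with homeomorphisms
`φ_U : Z → U` for `U ∈ ℬ` such that `φ_U[X] = X ∩ U`. -/
def HHomEmbedded {Z : Type*} [TopologicalSpace Z] (X : Set Z) : Prop :=
  ∃ ℬ : Set (Set Z),
    (∀ U ∈ ℬ, IsClopen U ∧ U.Nonempty) ∧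
    (∀ V : Set Z, IsOpen V → V.Nonempty → ∃ U ∈ ℬ, U ⊆ V) ∧
    (∀ U ∈ ℬ, ∃ φ : Z ≃ₜ U, Subtype.val '' (⇑φ '' X) = X ∩ U)
/-- A space `X` is countably controlled if every countable subset of `X` is
contained in a Polish subspace of `X`. -/
def CountablyControlled (X : Type*) [TopologicalSpace X] : Prop :=
  ∀ D : Set X, D.Countable → ∃ G : Set X, D ⊆ G ∧ PolishSpace G
/-- A space is countable dense homogeneous (CDH) if for every pair of countable
dense subsets `A`, `B` there is a homeomorphism of the space onto itself
mapping `A` onto `B`. -/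
def IsCDH (X : Type*) [TopologicalSpace X] : Prop :=
  ∀ A B : Set X, A.Countable → Dense A → B.Countable → Dense B →
    ∃ h : X ≃ₜ X, h '' A = B

open Set Filter Topology

section generic
variable {Z : Type*} [MetricSpace Z] [CompactSpace Z]

/-- local extension property -/
def LocExt {Z : Type*} [TopologicalSpace Z] (R : Z → Z → Prop) (T : Set Z) : Prop :=
  ∀ (h : Z ≃ₜ Z) (V : Set Z), IsClopen V →
    ∃ g : Z ≃ₜ Z, (∀ x, x ∉ V → g x = h x) ∧ ∀ x ∈ T ∩ V, R x (g x)

lemma supp_fwd {Z : Type*} [TopologicalSpace Z] {h g : Z ≃ₜ Z} {V : Set Z}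
    (hg : ∀ x, x ∉ V → g x = h x) {x : Z} (hx : x ∈ V) : h.symm (g x) ∈ V := by
  by_contra hy
  have h1 := hg _ hy
  rw [Homeomorph.apply_symm_apply] at h1
  rw [g.injective h1] at hy
  exact hy hx

lemma glue_exists (h : Z ≃ₜ Z) {K : Set Z} (D : ℕ → Set Z)
    (hD : ∀ i, IsClopen (D i)) (hdisj : ∀ i j x, x ∈ D i → x ∈ D j → i = j)
    (hcov : ∀ x, x ∈ K ↔ ∀ i, x ∉ D i)
    (hsmall : ∀ i, ∀ x ∈ D i, ∀ y ∈ D i, ∀ z ∈ K, dist (h x) (h y) ≤ dist (h x) (h z))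
    (g : ℕ → Z ≃ₜ Z) (hg : ∀ i x, x ∉ D i → g i x = h x) :
    ∃ h' : Z ≃ₜ Z, (∀ x ∈ K, h' x = h x) ∧ ∀ i, ∀ x ∈ D i, h' x = g i x := by
  classical
  let f : Z → Z := fun x => if hx : ∃ i, x ∈ D i then g hx.choose x else h x
  have fD : ∀ i, ∀ x ∈ D i, f x = g i x := by
    intro i x hx
    have hex : ∃ i, x ∈ D i := ⟨i, hx⟩
    have : hex.choose = i := hdisj _ _ x hex.choose_spec hx
    simp only [f, dif_pos hex, this]
  have fK : ∀ x ∈ K, f x = h x := by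
    intro x hx
    have : ¬ ∃ i, x ∈ D i := by
      push Not; exact (hcov x).1 hx
    simp only [f, dif_neg this]
  have cases : ∀ x, x ∈ K ∨ ∃ i, x ∈ D i := by
    intro x
    by_cases hx : ∃ i, x ∈ D i
    · exact Or.inr hx
    · push Not at hx; exact Or.inl ((hcov x).2 hx)
  have finj : Function.Injective f := by
    intro x x' hxx
    rcases cases x with hx | ⟨i, hx⟩ <;> rcases cases x' with hx' | ⟨j, hx'⟩
    · rw [fK _ hx, fK _ hx'] at hxx
      exact h.injective hxx
    · rw [fK _ hx, fD _ _ hx'] at hxx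
      have := supp_fwd (hg j) hx'
      rw [← hxx, Homeomorph.symm_apply_apply] at this
      exact absurd this ((hcov x).1 hx j)
    · rw [fK _ hx', fD _ _ hx] at hxx
      have := supp_fwd (hg i) hx
      rw [hxx, Homeomorph.symm_apply_apply] at this
      exact absurd this ((hcov x').1 hx' i)
    · rw [fD _ _ hx, fD _ _ hx'] at hxx
      have h1 := supp_fwd (hg i) hx
      have h2 := supp_fwd (hg j) hx'
      rw [hxx] at h1
      have := hdisj _ _ _ h1 h2
      subst this
      exact (g i).injective hxx
  have fsurj : Function.Surjective f := by
    intro w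
    obtain ⟨y, rfl⟩ := h.surjective w
    rcases cases y with hy | ⟨i, hy⟩
    · exact ⟨y, fK y hy⟩
    · have := supp_fwd (h := g i) (g := h) (fun x hx => (hg i x hx).symm) hy
      exact ⟨_, by rw [fD i _ this, Homeomorph.apply_symm_apply]⟩
  have fcont : Continuous f := by
    rw [continuous_iff_continuousAt]
    intro x
    rcases cases x with hx | ⟨i, hx⟩
    · have key : ∀ y, dist (f y) (h x) ≤ 2 * dist (h y) (h x) := by
        intro y
        rcases cases y with hy | ⟨j, hy⟩
        · rw [fK y hy]; linarith [dist_nonneg (x := h y) (y := h x)]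
        · rw [fD j y hy]
          have h1 := supp_fwd (hg j) hy
          have h2 := hsmall j y hy _ h1 x hx
          rw [Homeomorph.apply_symm_apply] at h2
          have := dist_triangle_left (g j y) (h x) (h y)
          linarith
      rw [ContinuousAt, fK x hx, tendsto_iff_dist_tendsto_zero]
      refine squeeze_zero (fun _ => dist_nonneg) key ?_
      have : Tendsto (fun y => 2 * dist (h y) (h x)) (𝓝 x) (𝓝 (2 * dist (h x) (h x))) :=
        (by fun_prop : Continuous (fun y => 2 * dist (h y) (h x))).tendsto x
      simpa using this
    · have : f =ᶠ[𝓝 x] g i :=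
        Filter.eventuallyEq_of_mem ((hD i).isOpen.mem_nhds hx) (fD i)
      exact (g i).continuous.continuousAt.congr this.symm
  let e : Z ≃ Z := Equiv.ofBijective f ⟨finj, fsurj⟩
  have he : Continuous e := fcont
  refine ⟨he.homeoOfEquivCompactToT2, fK, fD⟩

lemma partition_exists [TotallyDisconnectedSpace Z] (h : Z ≃ₜ Z) {K : Set Z} (hK : IsClosed K)
    {ε : ℝ} (hε : 0 < ε) :
    ∃ D : ℕ → Set Z, (∀ i, IsClopen (D i)) ∧ (∀ i j x, x ∈ D i → x ∈ D j → i = j) ∧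
      (∀ x, x ∈ K ↔ ∀ i, x ∉ D i) ∧
      (∀ i, ∀ x ∈ D i, ∀ y ∈ D i, ∀ z ∈ K, dist (h x) (h y) ≤ dist (h x) (h z)) ∧
      (∀ i, ∀ x ∈ D i, ∀ y ∈ D i, dist x y ≤ ε ∧ dist (h x) (h y) ≤ ε) := by
  have loc : ∀ x : (Kᶜ : Set Z), ∃ V : Set Z, IsClopen V ∧ (x : Z) ∈ V ∧ V ⊆ Kᶜ ∧
      (∀ u ∈ V, ∀ y ∈ V, ∀ z ∈ K, dist (h u) (h y) ≤ dist (h u) (h z)) ∧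
      (∀ u ∈ V, ∀ y ∈ V, dist u y ≤ ε ∧ dist (h u) (h y) ≤ ε) := by
    rintro ⟨x, hx⟩
    have hKc : IsClosed (h '' K) := h.isClosedMap _ hK
    have hx' : h x ∈ (h '' K)ᶜ := by
      rintro ⟨y, hy, e⟩
      rw [h.injective e] at hy
      exact hx hy
    obtain ⟨δ, hδ, hball⟩ := Metric.isOpen_iff.1 hKc.isOpen_compl _ hx'
    let r := min (δ / 3) (ε / 2)
    have hr : 0 < r := by positivity
    have hr1 : r ≤ δ / 3 := min_le_left _ _
    have hr2 : r ≤ ε / 2 := min_le_right _ _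
    let O := Metric.ball x r ∩ h ⁻¹' (Metric.ball (h x) r) ∩ Kᶜ
    have hO : IsOpen O := (Metric.isOpen_ball.inter
      (Metric.isOpen_ball.preimage h.continuous)).inter hK.isOpen_compl
    have hxO : x ∈ O := ⟨⟨Metric.mem_ball_self hr, Metric.mem_ball_self hr⟩, hx⟩
    obtain ⟨V, hV, hxV, hVO⟩ := compact_exists_isClopen_in_isOpen hO hxO
    refine ⟨V, hV, hxV, fun y hy => (hVO hy).2, ?_, ?_⟩
    · intro u hu y hy z hz
      have h1 : dist (h u) (h x) < r := (hVO hu).1.2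
      have h2 : dist (h y) (h x) < r := (hVO hy).1.2
      have h3 : δ ≤ dist (h z) (h x) := by
        by_contra hlt
        exact hball (not_le.1 hlt) ⟨z, hz, rfl⟩
      have h4 := dist_triangle_right (h u) (h y) (h x)
      have h5 := dist_triangle_left (h z) (h x) (h u)
      linarith
    · intro u hu y hy
      have h1 : dist (h u) (h x) < r := (hVO hu).1.2
      have h2 : dist (h y) (h x) < r := (hVO hy).1.2
      have h1' : dist u x < r := (hVO hu).1.1
      have h2' : dist y x < r := (hVO hy).1.1
      have h4 := dist_triangle_right (h u) (h y) (h x)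
      have h4' := dist_triangle_right u y x
      constructor <;> linarith
  choose V hVc hxV hVK hV1 hV2 using loc
  obtain ⟨S, hS, hSU⟩ := TopologicalSpace.isOpen_iUnion_countable V (fun x => (hVc x).isOpen)
  by_cases hSe : S.Nonempty
  · obtain ⟨s, rfl⟩ := hS.exists_eq_range hSe
    have hsub : ∀ i, disjointed (fun n => V (s n)) i ⊆ V (s i) := fun i => disjointed_subset _ i
    refine ⟨disjointed (fun n => V (s n)), ?_, ?_, ?_, ?_, ?_⟩
    · intro i
      exact disjointedRec (fun _ _ ht => ht.diff (hVc _)) (hVc _)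
    · intro i j x hi hj
      by_contra hij
      exact (Set.disjoint_left.1 (disjoint_disjointed (fun n => V (s n)) hij)) hi hj
    · intro x
      have hU : (⋃ i, disjointed (fun n => V (s n)) i) = Kᶜ := by
        rw [iUnion_disjointed]
        apply Subset.antisymm
        · exact iUnion_subset fun i => hVK _
        · intro x hx
          have : x ∈ ⋃ i, V i := mem_iUnion.2 ⟨⟨x, hx⟩, hxV _⟩
          rw [← hSU] at this
          simpa using this
      rw [← not_iff_not, ← mem_compl_iff, ← hU]
      simp
    · intro i x hx y hy
      exact hV1 _ x (hsub i hx) y (hsub i hy)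
    · intro i x hx y hy
      exact hV2 _ x (hsub i hx) y (hsub i hy)
  · rw [not_nonempty_iff_eq_empty] at hSe
    subst hSe
    refine ⟨fun _ => ∅, by simp [isClopen_empty], by simp, ?_, by simp, by simp⟩
    intro x
    simp only [mem_empty_iff_false, not_false_eq_true, implies_true, iff_true]
    by_contra hx
    have : x ∈ ⋃ i, V i := mem_iUnion.2 ⟨⟨x, hx⟩, hxV _⟩
    rw [← hSU] at this
    simp at this

lemma step_one [TotallyDisconnectedSpace Z] {R : Z → Z → Prop} {T : Set Z} (hT : LocExt R T)
    (h : Z ≃ₜ Z) {K : Set Z} (hK : IsClosed K) (hR : ∀ x ∈ K, R x (h x))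
    {ε : ℝ} (hε : 0 < ε) :
    ∃ h' : Z ≃ₜ Z, (∀ x ∈ K, h' x = h x) ∧ (∀ x ∈ K ∪ T, R x (h' x)) ∧
      (∀ x, dist (h' x) (h x) ≤ ε) ∧ (∀ y, dist (h'.symm y) (h.symm y) ≤ ε) := by
  obtain ⟨D, hD, hdisj, hcov, hsmall, hmesh⟩ := partition_exists h hK hε
  choose g hg hgR using fun i => hT h (D i) (hD i)
  obtain ⟨h', hK', hD'⟩ := glue_exists h D hD hdisj hcov hsmall g hg
  have cases : ∀ x, x ∈ K ∨ ∃ i, x ∈ D i := by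
    intro x
    by_cases hx : ∃ i, x ∈ D i
    · exact Or.inr hx
    · push Not at hx; exact Or.inl ((hcov x).2 hx)
  refine ⟨h', hK', ?_, ?_, ?_⟩
  · intro x hx
    rcases cases x with hxK | ⟨i, hi⟩
    · rw [hK' x hxK]; exact hR x hxK
    · rw [hD' i x hi]
      refine hgR i x ⟨?_, hi⟩
      rcases hx with hx | hx
      · exact absurd hi ((hcov x).1 hx i)
      · exact hx
  · intro x
    rcases cases x with hxK | ⟨i, hi⟩
    · rw [hK' x hxK]; simpa using hε.le
    · rw [hD' i x hi]
      have := (hmesh i _ (supp_fwd (hg i) hi) x hi).2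
      rwa [Homeomorph.apply_symm_apply] at this
  · intro y
    obtain ⟨x, rfl⟩ := h'.surjective y
    rw [Homeomorph.symm_apply_apply]
    rcases cases x with hxK | ⟨i, hi⟩
    · rw [hK' x hxK]; simpa using hε.le
    · rw [hD' i x hi]
      exact (hmesh i x hi _ (supp_fwd (hg i) hi)).1

lemma step_two [TotallyDisconnectedSpace Z] {R : Z → Z → Prop} {T T' : Set Z}
    (hT : LocExt R T) (hT' : LocExt (fun x y => R y x) T') (hTc : IsClosed T) (hTc' : IsClosed T')
    (h : Z ≃ₜ Z) {K : Set Z} (hK : IsClosed K) (hR : ∀ x ∈ K, R x (h x))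
    {ε : ℝ} (hε : 0 < ε) :
    ∃ (h' : Z ≃ₜ Z) (K' : Set Z), IsClosed K' ∧ (∀ x ∈ K', R x (h' x)) ∧ K ⊆ K' ∧ T ⊆ K' ∧
      (∀ y ∈ T', h'.symm y ∈ K') ∧ (∀ x ∈ K, h' x = h x) ∧
      (∀ x, dist (h' x) (h x) ≤ ε) ∧ (∀ y, dist (h'.symm y) (h.symm y) ≤ ε) := by
  obtain ⟨h1, a1, a2, a3, a4⟩ := step_one hT h hK hR (half_pos hε)
  obtain ⟨h2, b1, b2, b3, b4⟩ := step_one hT' h1.symm (K := h1 '' (K ∪ T))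
    (h1.isClosedMap _ (hK.union hTc)) (by
      rintro _ ⟨x, hx, rfl⟩
      rw [Homeomorph.symm_apply_apply]
      exact a2 x hx) (half_pos hε)
  have agree : ∀ x ∈ K ∪ T, h2.symm x = h1 x := by
    intro x hx
    have := b1 (h1 x) ⟨x, hx, rfl⟩
    rw [Homeomorph.symm_apply_apply] at this
    rw [Homeomorph.symm_apply_eq, this]
  refine ⟨h2.symm, (K ∪ T) ∪ h2 '' T', (hK.union hTc).union (h2.isClosedMap _ hTc'), ?_, ?_, ?_,
    ?_, ?_, ?_, ?_⟩
  · rintro x (hx | ⟨y, hy, rfl⟩)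
    · rw [agree x hx]; exact a2 x hx
    · rw [Homeomorph.symm_apply_apply]
      exact b2 y (Or.inr hy)
  · exact fun x hx => Or.inl (Or.inl hx)
  · exact fun x hx => Or.inl (Or.inr hx)
  · intro y hy
    exact Or.inr ⟨y, hy, rfl⟩
  · intro x hx
    rw [agree x (Or.inl hx), a1 x hx]
  · intro x
    have := dist_triangle (h2.symm x) (h1 x) (h x)
    have h3 := a3 x
    have h4 := b4 x
    simp only [Homeomorph.symm_symm] at h4
    linarith
  · intro y
    have := dist_triangle (h2 y) (h1.symm y) (h.symm y)
    have h3 := a4 y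
    have h4 := b3 y
    simp only [Homeomorph.symm_symm]
    linarith

lemma limit_exists (h : ℕ → Z ≃ₜ Z) (h1 : ∀ n x, dist (h n x) (h (n+1) x) ≤ 1 * (1/2 : ℝ)^n)
    (h2 : ∀ n x, dist ((h n).symm x) ((h (n+1)).symm x) ≤ 1 * (1/2 : ℝ)^n) :
    ∃ H : Z ≃ₜ Z, (∀ x, Tendsto (fun n => h n x) atTop (𝓝 (H x))) ∧
      ∀ x, Tendsto (fun n => (h n).symm x) atTop (𝓝 (H.symm x)) := by
  have gen : ∀ f : ℕ → Z ≃ₜ Z, (∀ n x, dist (f n x) (f (n+1) x) ≤ 1 * (1/2 : ℝ)^n) →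
      ∃ F : Z → Z, Continuous F ∧ TendstoUniformly (fun n x => f n x) F atTop := by
    intro f hf
    have hc : ∀ x, ∃ y, Tendsto (fun n => f n x) atTop (𝓝 y) := fun x =>
      cauchySeq_tendsto_of_complete
        (cauchySeq_of_le_geometric (1/2) 1 (by norm_num) (fun n => hf n x))
    choose F hF using hc
    have hu : TendstoUniformly (fun n x => f n x) F atTop := by
      rw [Metric.tendstoUniformly_iff]
      intro ε hε
      have ht : Tendsto (fun n : ℕ => 1 * (1/2 : ℝ)^n / (1 - 1/2)) atTop (𝓝 0) := by
        have := (tendsto_pow_atTop_nhds_zero_of_lt_one (r := (1/2 : ℝ)) (by norm_num)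
          (by norm_num)).const_mul 2
        simp only [mul_zero] at this
        refine this.congr fun n => ?_
        ring
      filter_upwards [ht.eventually (gt_mem_nhds hε)] with n hn x
      have := dist_le_of_le_geometric_of_tendsto (1/2) 1 (by norm_num) (fun n => hf n x) (hF x) n
      rw [dist_comm]
      exact this.trans_lt hn
    exact ⟨F, hu.continuous (Filter.Eventually.of_forall fun n => (f n).continuous).frequently, hu⟩
  obtain ⟨F, Fc, Fu⟩ := gen h h1
  obtain ⟨F', Fc', Fu'⟩ := gen (fun n => (h n).symm) h2
  have inv1 : ∀ x, F' (F x) = x := by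
    intro x
    have := Fu'.tendsto_comp Fc'.continuousAt (Fu.tendsto_at x)
    simp only [Homeomorph.symm_apply_apply] at this
    exact tendsto_nhds_unique this tendsto_const_nhds
  have inv2 : ∀ x, F (F' x) = x := by
    intro x
    have := Fu.tendsto_comp Fc.continuousAt (Fu'.tendsto_at x)
    simp only [Homeomorph.apply_symm_apply] at this
    exact tendsto_nhds_unique this tendsto_const_nhds
  exact ⟨⟨⟨F, F', inv1, inv2⟩, Fc, Fc'⟩, fun x => Fu.tendsto_at x, fun x => Fu'.tendsto_at x⟩

theorem back_and_forth [TotallyDisconnectedSpace Z] {R : Z → Z → Prop} (T T' : ℕ → Set Z)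
    (hT : ∀ n, LocExt R (T n)) (hT' : ∀ n, LocExt (fun x y => R y x) (T' n))
    (hTc : ∀ n, IsClosed (T n)) (hTc' : ∀ n, IsClosed (T' n)) :
    ∃ H : Z ≃ₜ Z, (∀ n, ∀ x ∈ T n, R x (H x)) ∧ ∀ n x, H x ∈ T' n → R x (H x) := by
  let S := {p : (Z ≃ₜ Z) × Set Z // IsClosed p.2 ∧ ∀ x ∈ p.2, R x (p.1 x)}
  have hstep : ∀ (n : ℕ) (s : S), ∃ s' : S, s.1.2 ⊆ s'.1.2 ∧ T n ⊆ s'.1.2 ∧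
      (∀ y ∈ T' n, s'.1.1.symm y ∈ s'.1.2) ∧ (∀ x ∈ s.1.2, s'.1.1 x = s.1.1 x) ∧
      (∀ x, dist (s'.1.1 x) (s.1.1 x) ≤ (1/2 : ℝ)^n) ∧
      (∀ y, dist (s'.1.1.symm y) (s.1.1.symm y) ≤ (1/2 : ℝ)^n) := by
    rintro n ⟨⟨h, K⟩, hK, hR⟩
    obtain ⟨h', K', c1, c2, c3⟩ := step_two (hT n) (hT' n) (hTc n) (hTc' n) h hK hR
      (ε := (1/2 : ℝ)^n) (by positivity)
    exact ⟨⟨⟨h', K'⟩, c1, c2⟩, c3⟩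
  choose nxt n1 n2 n3 n4 n5 n6 using hstep
  let s : ℕ → S := fun n => Nat.rec ⟨⟨Homeomorph.refl Z, ∅⟩, isClosed_empty, by simp⟩ nxt n
  have hs : ∀ n, s (n+1) = nxt n (s n) := fun n => rfl
  obtain ⟨H, H1, H2⟩ := limit_exists (fun n => (s n).1.1)
    (fun n x => by rw [hs, dist_comm, one_mul]; exact n5 n (s n) x)
    (fun n x => by rw [hs, dist_comm, one_mul]; exact n6 n (s n) x)
  have hmono : ∀ n m, n ≤ m → (s n).1.2 ⊆ (s m).1.2 ∧
      ∀ x ∈ (s n).1.2, (s m).1.1 x = (s n).1.1 x := by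
    intro n m hnm
    induction m, hnm using Nat.le_induction with
    | base => exact ⟨Subset.rfl, fun _ _ => rfl⟩
    | succ m hm ih =>
      rw [hs]
      refine ⟨ih.1.trans (n1 m (s m)), fun x hx => ?_⟩
      rw [n4 m (s m) x (ih.1 hx), ih.2 x hx]
  have hH : ∀ n, ∀ x ∈ (s n).1.2, H x = (s n).1.1 x := by
    intro n x hx
    refine tendsto_nhds_unique (H1 x) (tendsto_const_nhds.congr' ?_)
    filter_upwards [eventually_ge_atTop n] with m hm
    exact ((hmono n m hm).2 x hx).symm
  have hR : ∀ n, ∀ x ∈ (s n).1.2, R x (H x) := by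
    intro n x hx
    rw [hH n x hx]
    exact (s n).2.2 x hx
  refine ⟨H, fun n x hx => hR (n+1) x (n2 n (s n) hx), fun n x hx => ?_⟩
  have h3 := n3 n (s n) (H x) hx
  have h4 := hH (n+1) _ h3
  rw [hs, Homeomorph.apply_symm_apply] at h4
  have h5 := H.injective h4
  rw [h5] at h3
  exact hR (n+1) x h3

/-- a dense completely metrizable subspace is the complement of an `F_σ`. -/
lemma gdelta_of_polish {Y Z : Type*} [TopologicalSpace Y] [PolishSpace Y] [TopologicalSpace Z]
    [T2Space Z] (f : Y → Z) (hf : IsEmbedding f) (hd : DenseRange f) :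
    ∃ C : ℕ → Set Z, (∀ n, IsClosed (C n)) ∧ ∀ x, x ∉ range f ↔ ∃ n, x ∈ C n := by
  let := TopologicalSpace.upgradeIsCompletelyMetrizable Y
  let O : ℕ → Set Z := fun n => ⋃₀ {O | IsOpen O ∧ ∀ x y, f x ∈ O → f y ∈ O →
    dist x y < (1/2 : ℝ)^n}
  have hO : ∀ n, IsOpen (O n) := fun n => isOpen_sUnion fun U hU => hU.1
  refine ⟨fun n => (O n)ᶜ, fun n => (hO n).isClosed_compl, fun x => ?_⟩
  rw [← not_iff_not]
  push Not
  simp only [mem_compl_iff, not_not]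
  constructor
  · rintro ⟨y, rfl⟩ n
    have : Metric.ball y ((1/2 : ℝ)^n / 2) ∈ 𝓝 y := Metric.ball_mem_nhds _ (by positivity)
    rw [hf.nhds_eq_comap] at this
    obtain ⟨U, hU, hsub⟩ := this
    obtain ⟨W, hWU, hW, hyW⟩ := mem_nhds_iff.1 hU
    refine ⟨W, ⟨hW, fun a b ha hb => ?_⟩, hyW⟩
    have h1 : dist a y < _ := hsub (hWU ha)
    have h2 : dist b y < _ := hsub (hWU hb)
    have := dist_triangle_right a b y
    linarith
  · intro hx
    have hne : (comap f (𝓝 x)).NeBot := by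
      rw [comap_neBot_iff]
      intro t ht
      obtain ⟨y, hy⟩ := hd.inter_nhds_nonempty ht
      obtain ⟨⟨a, rfl⟩, h2⟩ := hy
      exact ⟨a, h2⟩
    have hcau : Cauchy (comap f (𝓝 x)) := by
      rw [Metric.cauchy_iff]
      refine ⟨hne, fun ε hε => ?_⟩
      obtain ⟨n, hn⟩ := exists_pow_lt_of_lt_one hε (by norm_num : (1/2 : ℝ) < 1)
      obtain ⟨U, ⟨hU, hUd⟩, hxU⟩ := hx n
      exact ⟨f ⁻¹' U, preimage_mem_comap (hU.mem_nhds hxU),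
        fun a ha b hb => (hUd a b ha hb).trans hn⟩
    obtain ⟨y, hy⟩ := CompleteSpace.complete hcau
    have h1 : Tendsto f (comap f (𝓝 x)) (𝓝 (f y)) := (hf.continuous.tendsto y).mono_left hy
    exact ⟨y, tendsto_nhds_unique h1 tendsto_comap⟩
end generic

section cantor

/-- Prepend a bit. -/
def consB (b : Bool) (x : ℕ → Bool) : ℕ → Bool := fun n => Nat.casesOn n b x

/-- Drop the first bit. -/
def tailB (x : ℕ → Bool) : ℕ → Bool := fun n => x (n + 1)

lemma consB_continuous (b : Bool) : Continuous (consB b) := by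
  refine continuous_pi fun n => ?_
  cases n with
  | zero => exact continuous_const
  | succ n => exact continuous_apply n

lemma tailB_continuous : Continuous tailB :=
  continuous_pi fun n => continuous_apply (n + 1)

lemma tailB_consB (b : Bool) (x : ℕ → Bool) : tailB (consB b x) = x := rfl

lemma consB_zero (b : Bool) (x : ℕ → Bool) : consB b x 0 = b := rfl

lemma consB_tailB (x : ℕ → Bool) : consB (x 0) (tailB x) = x := by
  funext n; cases n <;> rfl

lemma isClopen_bit (n : ℕ) (b : Bool) : IsClopen {x : ℕ → Bool | x n = b} :=
  (isClopen_discrete {b}).preimage (continuous_apply n)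

lemma isClopen_cyl (x : ℕ → Bool) (n : ℕ) : IsClopen {y : ℕ → Bool | ∀ i < n, y i = x i} := by
  have : {y : ℕ → Bool | ∀ i < n, y i = x i} = ⋂ i ∈ Finset.range n, {y | y i = x i} := by
    ext y; simp
  rw [this]
  exact isClopen_biInter_finset fun i _ => isClopen_bit i _

lemma exists_cyl {O : Set (ℕ → Bool)} (hO : IsOpen O) {x : ℕ → Bool} (hx : x ∈ O) :
    ∃ n, ∀ y : ℕ → Bool, (∀ i < n, y i = x i) → y ∈ O := by
  obtain ⟨s, ⟨z, n, rfl⟩, hxs, hs⟩ :=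
    (PiNat.isTopologicalBasis_cylinders (fun _ : ℕ => Bool)).exists_subset_of_mem_open hx hO
  refine ⟨n, fun y hy => hs ?_⟩
  rw [PiNat.mem_cylinder_iff] at hxs ⊢
  intro i hi
  rw [hy i hi, hxs i hi]

lemma exists_level {S : Set (ℕ → Bool)} (hS : IsClopen S) :
    ∃ n, ∀ x ∈ S, ∀ y : ℕ → Bool, (∀ i < n, y i = x i) → y ∈ S := by
  refine IsCompact.induction_on (s := S)
    (p := fun s => ∃ n, ∀ x ∈ s, ∀ y : ℕ → Bool, (∀ i < n, y i = x i) → y ∈ S)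
    hS.isClosed.isCompact ⟨0, by simp⟩ ?_ ?_ ?_
  · rintro s t hst ⟨n, hn⟩
    exact ⟨n, fun x hx => hn x (hst hx)⟩
  · rintro s t ⟨n, hn⟩ ⟨m, hm⟩
    refine ⟨max n m, ?_⟩
    rintro x (hx | hx) y hy
    · exact hn x hx y fun i hi => hy i (lt_max_of_lt_left hi)
    · exact hm x hx y fun i hi => hy i (lt_max_of_lt_right hi)
  · intro x hx
    obtain ⟨n, hn⟩ := exists_cyl hS.isOpen hx
    refine ⟨_, mem_nhdsWithin_of_mem_nhds ((isClopen_cyl x n).isOpen.mem_nhds (fun i _ => rfl)), n, ?_⟩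
    intro z hz y hy
    exact hn y fun i hi => (hy i hi).trans (hz i hi)

lemma param_of_level (n : ℕ) : ∀ S : Set (ℕ → Bool), S.Nonempty →
    (∀ x ∈ S, ∀ y : ℕ → Bool, (∀ i < n, y i = x i) → y ∈ S) →
    ∃ f : (ℕ → Bool) → (ℕ → Bool), Continuous f ∧ Function.Injective f ∧ range f = S := by
  induction n with
  | zero =>
    rintro S ⟨x, hx⟩ hS
    refine ⟨id, continuous_id, Function.injective_id, ?_⟩
    rw [range_id, eq_comm, eq_univ_iff_forall]
    exact fun y => hS x hx y (by simp)
  | succ n ih =>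
    intro S hne hS
    have hlev : ∀ b, ∀ x ∈ consB b ⁻¹' S, ∀ y : ℕ → Bool, (∀ i < n, y i = x i) →
        y ∈ consB b ⁻¹' S := by
      intro b x hx y hy
      refine hS _ hx _ fun i hi => ?_
      cases i with
      | zero => rfl
      | succ i => exact hy i (by omega)
    have single : ∀ b, (consB b ⁻¹' S).Nonempty → ¬ (consB (!b) ⁻¹' S).Nonempty →
        ∃ f : (ℕ → Bool) → (ℕ → Bool), Continuous f ∧ Function.Injective f ∧ range f = S := by
      intro b hb hb'
      obtain ⟨f, fc, fi, fr⟩ := ih _ hb (hlev b)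
      refine ⟨fun x => consB b (f x), (consB_continuous b).comp fc, ?_, ?_⟩
      · intro x y hxy
        exact fi (congrArg tailB hxy)
      · ext y
        constructor
        · rintro ⟨x, rfl⟩
          have : f x ∈ consB b ⁻¹' S := fr ▸ mem_range_self x
          exact this
        · intro hy
          have hy0 : y 0 = b := by
            by_contra h0
            have h1 : y 0 = !b := by revert h0; cases y 0 <;> cases b <;> simp
            exact hb' ⟨tailB y, by rw [mem_preimage, ← h1, consB_tailB]; exact hy⟩
          have : tailB y ∈ consB b ⁻¹' S := by rw [mem_preimage, ← hy0, consB_tailB]; exact hy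
          rw [← fr] at this
          obtain ⟨x, hx⟩ := this
          exact ⟨x, by change consB b (f x) = y; rw [hx, ← hy0, consB_tailB]⟩
    by_cases h0 : (consB false ⁻¹' S).Nonempty
    · by_cases h1 : (consB true ⁻¹' S).Nonempty
      · have hb : ∀ b, (consB b ⁻¹' S).Nonempty := by rintro (_ | _) <;> assumption
        choose f fc fi fr using fun b => ih _ (hb b) (hlev b)
        refine ⟨fun x => consB (x 0) (f (x 0) (tailB x)), ?_, ?_, ?_⟩
        · rw [continuous_iff_continuousAt]
          intro x
          have hev : (fun y => consB (x 0) (f (x 0) (tailB y))) =ᶠ[𝓝 x]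
              (fun y => consB (y 0) (f (y 0) (tailB y))) :=
            Filter.eventuallyEq_of_mem ((isClopen_bit 0 (x 0)).isOpen.mem_nhds rfl)
              (fun y (hy : y 0 = x 0) => by simp only [hy])
          exact (((consB_continuous _).comp ((fc _).comp
            tailB_continuous)).continuousAt).congr hev
        · intro x y hxy
          have e0 : x 0 = y 0 := congrFun hxy 0
          have e1 := congrArg tailB hxy
          simp only [tailB_consB] at e1
          rw [e0] at e1
          rw [← consB_tailB x, ← consB_tailB y, e0, fi _ e1]
        · ext y
          constructor
          · rintro ⟨x, rfl⟩
            have : f (x 0) (tailB x) ∈ consB (x 0) ⁻¹' S := fr (x 0) ▸ mem_range_self _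
            exact this
          · intro hy
            have : tailB y ∈ consB (y 0) ⁻¹' S := by rw [mem_preimage, consB_tailB]; exact hy
            rw [← fr] at this
            obtain ⟨x, hx⟩ := this
            refine ⟨consB (y 0) x, ?_⟩
            simp only [tailB_consB, consB_zero]
            rw [hx, consB_tailB]
      · exact single false h0 h1
    · refine single true ?_ h0
      obtain ⟨x, hx⟩ := hne
      have hx' : tailB x ∈ consB (x 0) ⁻¹' S := by rw [mem_preimage, consB_tailB]; exact hx
      cases hb : x 0 with
      | false => rw [hb] at hx'; exact absurd ⟨_, hx'⟩ h0
      | true => rw [hb] at hx'; exact ⟨_, hx'⟩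

lemma clopen_homeo {S S' : Set (ℕ → Bool)} (hS : IsClopen S) (hne : S.Nonempty)
    (hS' : IsClopen S') (hne' : S'.Nonempty) : Nonempty (S ≃ₜ S') := by
  have : ∀ S : Set (ℕ → Bool), IsClopen S → S.Nonempty → Nonempty ((ℕ → Bool) ≃ₜ S) := by
    intro S hS hne
    obtain ⟨n, hn⟩ := exists_level hS
    obtain ⟨f, fc, fi, rfl⟩ := param_of_level n S hne hn
    exact ⟨(fc.isClosedEmbedding fi).isEmbedding.toHomeomorph⟩
  obtain ⟨e⟩ := this S hS hne
  obtain ⟨e'⟩ := this S' hS' hne'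
  exact ⟨e.symm.trans e'⟩

lemma exists_swap_homeo {W : Set (ℕ → Bool)} (hW : IsClopen W) {p q : ℕ → Bool} (hp : p ∈ W)
    (hq : q ∈ W) : ∃ τ : (ℕ → Bool) ≃ₜ (ℕ → Bool), τ p = q ∧ ∀ x, x ∉ W → τ x = x := by
  classical
  obtain ⟨n, hn⟩ := exists_level hW
  let S : Set (ℕ → Bool) := {y | ∀ i < n, y i = p i} ∪ {y | ∀ i < n, y i = q i}
  have hS : IsClopen S := (isClopen_cyl p n).union (isClopen_cyl q n)
  have hSW : S ⊆ W := by
    rintro x (hx | hx)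
    · exact hn p hp x hx
    · exact hn q hq x hx
  let k : (ℕ → Bool) → (ℕ → Bool) := fun x i => xor (x i) (xor (p i) (q i))
  have kc : Continuous k := continuous_pi fun i =>
    (continuous_of_discreteTopology (f := fun b : Bool => xor b (xor (p i) (q i)))).comp
      (continuous_apply i)
  have kk : ∀ x, k (k x) = x := by
    intro x; funext i; simp only [k]; cases x i <;> cases p i <;> cases q i <;> rfl
  have kS : ∀ x ∈ S, k x ∈ S := by
    rintro x (hx | hx)
    · right; intro i hi; simp only [k]; rw [hx i hi]; cases p i <;> cases q i <;> rfl
    · left; intro i hi; simp only [k]; rw [hx i hi]; cases p i <;> cases q i <;> rfl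
  let f : (ℕ → Bool) → (ℕ → Bool) := fun x => if x ∈ S then k x else x
  have ff : ∀ x, f (f x) = x := by
    intro x
    by_cases hx : x ∈ S
    · simp only [f, hx, if_true, kS x hx, kk]
    · simp only [f, hx, if_false]
  have fc : Continuous f := by
    refine continuous_if ?_ kc.continuousOn continuousOn_id
    intro a ha
    rw [show {a | a ∈ S} = S from rfl, hS.frontier_eq] at ha
    exact absurd ha (by simp)
  refine ⟨⟨⟨f, f, ff, ff⟩, fc, fc⟩, ?_, ?_⟩
  · have : p ∈ S := Or.inl fun i _ => rfl
    change f p = q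
    simp only [f, this, if_true]
    funext i; simp only [k]; cases p i <;> cases q i <;> rfl
  · intro x hx
    have : x ∉ S := fun h => hx (hSW h)
    change f x = x
    simp only [f, this, if_false]

lemma glue_three {Z : Type*} [TopologicalSpace Z] [CompactSpace Z] [T2Space Z]
    (h : Z ≃ₜ Z) {V N : Set Z} (hV : IsClopen V) (hN : IsClopen N) (hNV : N ⊆ V)
    (φ : Z → Z) (φc : Continuous φ) (φi : Function.Injective φ) (φV : ∀ x ∈ V, φ x ∈ h '' V)
    (ψ : N ≃ₜ ↥(h '' V \ φ '' (V \ N))) :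
    ∃ g : Z ≃ₜ Z, (∀ x, x ∉ V → g x = h x) ∧ ∀ x ∈ V \ N, g x = φ x := by
  classical
  let f : Z → Z := fun x => if hx : x ∈ N then (ψ ⟨x, hx⟩ : Z) else if x ∈ V then φ x else h x
  have fN : ∀ x (hx : x ∈ N), f x = ψ ⟨x, hx⟩ := fun x hx => by simp only [f, hx, dif_pos]
  have fV : ∀ x ∈ V \ N, f x = φ x := fun x hx => by simp only [f, hx.2, hx.1, dif_neg, if_true,
    not_false_eq_true]
  have fh : ∀ x, x ∉ V → f x = h x := fun x hx => by
    have : x ∉ N := fun h => hx (hNV h)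
    simp only [f, hx, this, dif_neg, if_false, not_false_eq_true]
  have cases : ∀ x, x ∈ N ∨ x ∈ V \ N ∨ x ∉ V := by
    intro x
    by_cases h1 : x ∈ N
    · exact Or.inl h1
    · by_cases h2 : x ∈ V
      · exact Or.inr (Or.inl ⟨h2, h1⟩)
      · exact Or.inr (Or.inr h2)
  have mN : ∀ x ∈ N, f x ∈ h '' V \ φ '' (V \ N) := fun x hx => by
    rw [fN x hx]; exact (ψ ⟨x, hx⟩).2
  have mV : ∀ x ∈ V \ N, f x ∈ h '' V ∧ f x ∈ φ '' (V \ N) := fun x hx => by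
    rw [fV x hx]; exact ⟨φV x hx.1, x, hx, rfl⟩
  have mh : ∀ x, x ∉ V → f x ∉ h '' V := fun x hx => by
    rw [fh x hx]
    rintro ⟨y, hy, e⟩
    rw [h.injective e] at hy
    exact hx hy
  have finj : Function.Injective f := by
    intro x y hxy
    rcases cases x with hx | hx | hx <;> rcases cases y with hy | hy | hy
    · rw [fN x hx, fN y hy] at hxy
      have := ψ.injective (Subtype.ext hxy)
      exact congrArg Subtype.val this
    · exact absurd (hxy ▸ (mV y hy).2) (mN x hx).2
    · exact absurd (hxy ▸ (mN x hx).1) (mh y hy)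
    · exact absurd (hxy ▸ (mV x hx).2) (mN y hy).2
    · rw [fV x hx, fV y hy] at hxy
      exact φi hxy
    · exact absurd (hxy ▸ (mV x hx).1) (mh y hy)
    · exact absurd (hxy ▸ (mN y hy).1) (mh x hx)
    · exact absurd (hxy ▸ (mV y hy).1) (mh x hx)
    · rw [fh x hx, fh y hy] at hxy
      exact h.injective hxy
  have fsurj : Function.Surjective f := by
    intro w
    by_cases h1 : w ∈ h '' V
    · by_cases h2 : w ∈ φ '' (V \ N)
      · obtain ⟨x, hx, rfl⟩ := h2
        exact ⟨x, fV x hx⟩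
      · refine ⟨ψ.symm ⟨w, h1, h2⟩, ?_⟩
        rw [fN _ (ψ.symm ⟨w, h1, h2⟩).2]
        simp
    · refine ⟨h.symm w, ?_⟩
      rw [fh, Homeomorph.apply_symm_apply]
      exact fun hx => h1 ⟨_, hx, by simp⟩
  have fcont : Continuous f := by
    rw [continuous_iff_continuousAt]
    intro x
    rcases cases x with hx | hx | hx
    · have := hN.isOpen.isOpenEmbedding_subtypeVal.continuousAt_iff (g := f) (x := ⟨x, hx⟩)
      refine this.1 (Continuous.continuousAt ?_)
      have e : f ∘ (Subtype.val : N → Z) = fun y => (ψ y : Z) := by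
        funext y; exact fN y.1 y.2
      rw [e]
      exact continuous_subtype_val.comp ψ.continuous
    · exact φc.continuousAt.congr
        (Filter.eventuallyEq_of_mem ((hV.diff hN).isOpen.mem_nhds hx) fV).symm
    · exact h.continuous.continuousAt.congr
        (Filter.eventuallyEq_of_mem (hV.compl.isOpen.mem_nhds hx) fh).symm
  let e : Z ≃ Z := Equiv.ofBijective f ⟨finj, fsurj⟩
  have he : Continuous e := fcont
  exact ⟨he.homeoOfEquivCompactToT2, fh, fV⟩

/-- The relation to be realised by the homeomorphism. -/
def RelXAB {Z : Type*} (X A B : Set Z) (x y : Z) : Prop := (x ∈ X ↔ y ∈ X) ∧ (x ∈ A ↔ y ∈ B)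

lemma locExt_point {X A B : Set (ℕ → Bool)} (hA : A ⊆ X) (hB : B ⊆ X) (hd : Dense B)
    {a : ℕ → Bool} (ha : a ∈ A) : LocExt (RelXAB X A B) {a} := by
  intro h V hV
  by_cases haV : a ∈ V
  · have hW : IsClopen (h '' V) := ⟨h.isClosedMap _ hV.isClosed, h.isOpenMap _ hV.isOpen⟩
    obtain ⟨b, hbW, hb⟩ := hd.inter_open_nonempty _ hW.isOpen ⟨h a, a, haV, rfl⟩
    obtain ⟨τ, h1, h2⟩ := exists_swap_homeo hW (p := h a) ⟨a, haV, rfl⟩ hbW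
    refine ⟨h.trans τ, fun x hx => h2 _ ?_, ?_⟩
    · rintro ⟨y, hy, e⟩
      rw [h.injective e] at hy
      exact hx hy
    · rintro x ⟨rfl, -⟩
      have : (h.trans τ) x = b := h1
      rw [this]
      exact ⟨iff_of_true (hA ha) (hB hb), iff_of_true ha hb⟩
  · refine ⟨h, fun _ _ => rfl, ?_⟩
    rintro x ⟨rfl, hx⟩
    exact absurd hx haV

lemma locExt_closed {X A B C : Set (ℕ → Bool)} (hC : IsClosed C) (hCd : Dense Cᶜ)
    (hφ : ∀ W : Set (ℕ → Bool), IsOpen W → W.Nonempty →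
      ∃ φ : (ℕ → Bool) → (ℕ → Bool), Continuous φ ∧ Function.Injective φ ∧ (∀ x, φ x ∈ W) ∧
        IsOpenMap φ ∧ (∀ x, x ∈ X ↔ φ x ∈ X) ∧ ∀ x ∈ C, x ∉ A ∧ φ x ∉ B) :
    LocExt (RelXAB X A B) C := by
  intro h V hV
  by_cases hne : V.Nonempty
  · have hW : IsClopen (h '' V) := ⟨h.isClosedMap _ hV.isClosed, h.isOpenMap _ hV.isOpen⟩
    obtain ⟨φ, φc, φi, φW, φo, φX, φC⟩ := hφ _ hW.isOpen (hne.image h)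
    obtain ⟨x, hxV, hxC⟩ := hCd.inter_open_nonempty V hV.isOpen hne
    obtain ⟨N, hN, hxN, hNs⟩ := compact_exists_isClopen_in_isOpen
      (hV.isOpen.inter hC.isOpen_compl) ⟨hxV, hxC⟩
    have hM : IsClopen (h '' V \ φ '' (V \ N)) := by
      refine hW.diff ⟨φc.isClosedMap _ (hV.diff hN).isClosed, φo _ (hV.diff hN).isOpen⟩
    have hMne : (h '' V \ φ '' (V \ N)).Nonempty := by
      refine ⟨φ x, φW x, ?_⟩
      rintro ⟨y, hy, e⟩
      rw [φi e] at hy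
      exact hy.2 hxN
    obtain ⟨ψ⟩ := clopen_homeo hN ⟨x, hxN⟩ hM hMne
    obtain ⟨g, g1, g2⟩ := glue_three h hV hN (fun y hy => (hNs hy).1) φ φc φi
      (fun x _ => φW x) ψ
    refine ⟨g, g1, ?_⟩
    rintro y ⟨hyC, hyV⟩
    rw [g2 y ⟨hyV, fun hy => (hNs hy).2 hyC⟩]
    exact ⟨φX y, iff_of_false (φC y hyC).1 (φC y hyC).2⟩
  · rw [not_nonempty_iff_eq_empty] at hne
    subst hne
    exact ⟨h, fun _ _ => rfl, by simp⟩

lemma locExt_flip {X A B T : Set (ℕ → Bool)} (h : LocExt (RelXAB X B A) T) :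
    LocExt (fun x y => RelXAB X A B y x) T := by
  intro e V hV
  obtain ⟨g, g1, g2⟩ := h e V hV
  exact ⟨g, g1, fun x hx => ⟨(g2 x hx).1.symm, (g2 x hx).2.symm⟩⟩

lemma hhom_maps {X : Set (ℕ → Bool)} (hX : HHomEmbedded X) (W : Set (ℕ → Bool)) (hW : IsOpen W)
    (hne : W.Nonempty) :
    ∃ φ : (ℕ → Bool) → (ℕ → Bool), Continuous φ ∧ Function.Injective φ ∧ (∀ x, φ x ∈ W) ∧
        IsOpenMap φ ∧ (∀ x, x ∈ X ↔ φ x ∈ X) := by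
  obtain ⟨ℬ, h1, h2, h3⟩ := hX
  obtain ⟨U, hU, hUW⟩ := h2 W hW hne
  obtain ⟨φ, hφ⟩ := h3 U hU
  refine ⟨fun x => φ x, continuous_subtype_val.comp φ.continuous,
    Subtype.val_injective.comp φ.injective, fun x => hUW (φ x).2,
    (h1 U hU).1.isOpen.isOpenMap_subtype_val.comp φ.isOpenMap, fun x => ⟨fun hx => ?_, fun hx => ?_⟩⟩
  · have : (φ x : ℕ → Bool) ∈ X ∩ U := hφ ▸ ⟨φ x, ⟨x, hx, rfl⟩, rfl⟩
    exact this.1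
  · have : (φ x : ℕ → Bool) ∈ X ∩ U := ⟨hx, (φ x).2⟩
    rw [← hφ] at this
    obtain ⟨_, ⟨y, hy, rfl⟩, e⟩ := this
    rwa [φ.injective (Subtype.ext e)] at hy

end cantor

/-- If `X` is a subspace of the Cantor set `2^ω` that is h-homogeneously
embedded in `2^ω` and countably controlled, then `X` is countable dense
homogeneous. -/
theorem statement10 (X : Set (ℕ → Bool))
    (h1 : HHomEmbedded X) (h2 : CountablyControlled X) : IsCDH X := by
  intro A B hAc hAd hBc hBd
  by_cases hXne : X.Nonempty
  swap
  · have : IsEmpty X := ⟨fun x => hXne ⟨x.1, x.2⟩⟩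
    exact ⟨Homeomorph.refl _, Subsingleton.elim _ _⟩
  -- `X` is dense
  have hXd : Dense X := by
    rw [dense_iff_inter_open]
    intro W hW hne
    obtain ⟨φ, -, -, φW, -, φX⟩ := hhom_maps h1 W hW hne
    obtain ⟨x, hx⟩ := hXne
    exact ⟨φ x, φW x, (φX x).1 hx⟩
  have dense_img : ∀ S : Set X, Dense S → Dense (Subtype.val '' S : Set (ℕ → Bool)) := by
    intro S hS
    exact (hXd.denseRange_val).dense_image continuous_subtype_val hS
  set A' : Set (ℕ → Bool) := Subtype.val '' A with hA'
  set B' : Set (ℕ → Bool) := Subtype.val '' B with hB'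
  have hA'X : A' ⊆ X := by rintro _ ⟨x, -, rfl⟩; exact x.2
  have hB'X : B' ⊆ X := by rintro _ ⟨x, -, rfl⟩; exact x.2
  have hA'd : Dense A' := dense_img A hAd
  have hB'd : Dense B' := dense_img B hBd
  have hA'c : A'.Countable := hAc.image _
  have hB'c : B'.Countable := hBc.image _
  -- countable family of maps
  choose φ φc φi φW φo φX using fun V : TopologicalSpace.countableBasis (ℕ → Bool) =>
    hhom_maps h1 V.1 (TopologicalSpace.isOpen_of_mem_countableBasis V.2)
      (TopologicalSpace.nonempty_of_mem_countableBasis V.2)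
  have : Countable (TopologicalSpace.countableBasis (ℕ → Bool)) :=
    (TopologicalSpace.countable_countableBasis _).to_subtype
  let D : Set (ℕ → Bool) := (A' ∪ B') ∪ ⋃ V, φ V ⁻¹' (A' ∪ B')
  have hDc : D.Countable := (hA'c.union hB'c).union
    (countable_iUnion fun V => (hA'c.union hB'c).preimage (φi V))
  have hDX : D ⊆ X := by
    rintro x (hx | hx)
    · exact union_subset hA'X hB'X hx
    · obtain ⟨V, hV⟩ := mem_iUnion.1 hx
      exact (φX V x).2 (union_subset hA'X hB'X hV)
  obtain ⟨G, hDG, hG⟩ := h2 (Subtype.val ⁻¹' D) (hDc.preimage Subtype.val_injective)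
  let f : G → (ℕ → Bool) := fun x => ((x : X) : ℕ → Bool)
  have hf : IsEmbedding f := IsEmbedding.subtypeVal.comp IsEmbedding.subtypeVal
  have hDf : D ⊆ range f := fun x hx => ⟨⟨⟨x, hDX hx⟩, hDG hx⟩, rfl⟩
  have hfX : range f ⊆ X := by rintro _ ⟨x, rfl⟩; exact x.1.2
  have hfd : DenseRange f := hA'd.mono (fun x hx => hDf (Or.inl (Or.inl hx)))
  obtain ⟨C, hCc, hC⟩ := gdelta_of_polish f hf hfd
  have hCD : ∀ n, ∀ x ∈ C n, x ∉ D := fun n x hx hxD => (hC x).2 ⟨n, hx⟩ (hDf hxD)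
  have hCd : ∀ n, Dense (C n)ᶜ := fun n =>
    Dense.mono (fun x hx hxC => (hC x).2 ⟨n, hxC⟩ hx) hfd
  have hmaps : ∀ n, ∀ P ⊆ A' ∪ B', ∀ Q ⊆ A' ∪ B', ∀ W : Set (ℕ → Bool), IsOpen W → W.Nonempty →
      ∃ φ : (ℕ → Bool) → (ℕ → Bool), Continuous φ ∧ Function.Injective φ ∧ (∀ x, φ x ∈ W) ∧
        IsOpenMap φ ∧ (∀ x, x ∈ X ↔ φ x ∈ X) ∧ ∀ x ∈ C n, x ∉ P ∧ φ x ∉ Q := by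
    intro n P hP Q hQ W hW ⟨w, hw⟩
    obtain ⟨V, hV, -, hVW⟩ :=
      (TopologicalSpace.isBasis_countableBasis (ℕ → Bool)).exists_subset_of_mem_open hw hW
    refine ⟨φ ⟨V, hV⟩, φc _, φi _, fun x => hVW (φW ⟨V, hV⟩ x), φo _, φX _, fun x hx => ⟨?_, ?_⟩⟩
    · exact fun hxP => hCD n x hx (Or.inl (hP hxP))
    · exact fun hxQ => hCD n x hx (Or.inr (mem_iUnion.2 ⟨⟨V, hV⟩, hQ hxQ⟩))
  have hA'ne : A'.Nonempty := hA'd.nonempty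
  have hB'ne : B'.Nonempty := hB'd.nonempty
  obtain ⟨a, ha⟩ := hA'c.exists_eq_range hA'ne
  obtain ⟨b, hb⟩ := hB'c.exists_eq_range hB'ne
  have haA : ∀ n, a n ∈ A' := fun n => ha ▸ mem_range_self n
  have hbB : ∀ n, b n ∈ B' := fun n => hb ▸ mem_range_self n
  let T : ℕ ⊕ ℕ → Set (ℕ → Bool) := Sum.elim C fun n => {a n}
  let T' : ℕ ⊕ ℕ → Set (ℕ → Bool) := Sum.elim C fun n => {b n}
  let ι := Equiv.natSumNatEquivNat
  have hT : ∀ i, LocExt (RelXAB X A' B') (T i) := by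
    rintro (n | n)
    · exact locExt_closed (hCc n) (hCd n) (hmaps n _ subset_union_left _ subset_union_right)
    · exact locExt_point hA'X hB'X hB'd (haA n)
  have hT' : ∀ i, LocExt (fun x y => RelXAB X A' B' y x) (T' i) := by
    rintro (n | n)
    · exact locExt_flip
        (locExt_closed (hCc n) (hCd n) (hmaps n _ subset_union_right _ subset_union_left))
    · exact locExt_flip (locExt_point hB'X hA'X hA'd (hbB n))
  have hTc : ∀ i, IsClosed (T i) := by
    rintro (n | n)
    · exact hCc n
    · exact isClosed_singleton
  have hTc' : ∀ i, IsClosed (T' i) := by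
    rintro (n | n)
    · exact hCc n
    · exact isClosed_singleton
  let := TopologicalSpace.metrizableSpaceMetric (ℕ → Bool)
  obtain ⟨H, H1, H2⟩ := back_and_forth (R := RelXAB X A' B') (fun n => T (ι.symm n))
    (fun n => T' (ι.symm n)) (fun n => hT _) (fun n => hT' _) (fun n => hTc _) (fun n => hTc' _)
  have H1' : ∀ i, ∀ x ∈ T i, RelXAB X A' B' x (H x) := fun i x hx =>
    H1 (ι i) x (by simpa using hx)
  have H2' : ∀ i, ∀ x, H x ∈ T' i → RelXAB X A' B' x (H x) := fun i x hx =>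
    H2 (ι i) x (by simpa using hx)
  have key : ∀ x, RelXAB X A' B' x (H x) := by
    intro x
    by_cases c1 : ∃ i, x ∈ T i
    · exact c1.elim fun i hi => H1' i x hi
    by_cases c2 : ∃ i, H x ∈ T' i
    · exact c2.elim fun i hi => H2' i x hi
    push Not at c1 c2
    have d1 : x ∈ range f := by
      by_contra hx
      obtain ⟨n, hn⟩ := (hC x).1 hx
      exact c1 (Sum.inl n) hn
    have d2 : H x ∈ range f := by
      by_contra hx
      obtain ⟨n, hn⟩ := (hC _).1 hx
      exact c2 (Sum.inl n) hn
    have d3 : x ∉ A' := by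
      rw [ha]
      rintro ⟨n, rfl⟩
      exact c1 (Sum.inr n) rfl
    have d4 : H x ∉ B' := by
      rw [hb]
      rintro ⟨n, hn⟩
      exact c2 (Sum.inr n) hn.symm
    exact ⟨iff_of_true (hfX d1) (hfX d2), iff_of_false d3 d4⟩
  refine ⟨H.subtype (fun x => (key x).1), ?_⟩
  ext y
  constructor
  · rintro ⟨x, hx, rfl⟩
    have : H x ∈ B' := (key x).2.1 ⟨x, hx, rfl⟩
    obtain ⟨z, hz, e⟩ := this
    have e' : z = H.subtype (fun x => (key x).1) x := Subtype.ext e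
    exact e' ▸ hz
  · intro hy
    have h3 : H (H.symm y) ∈ B' := by
      rw [Homeomorph.apply_symm_apply]; exact ⟨y, hy, rfl⟩
    obtain ⟨x, hx, e⟩ := (key _).2.2 h3
    refine ⟨x, hx, Subtype.ext ?_⟩
    change H x = y
    rw [e, Homeomorph.apply_symm_apply]
end

section
/- Let I be a countable set, and for each i ∈ I let X_i be a subspace of a separable metrizable space Z_i such that X_i is h-homogeneously embedded in Z_i. Then the product ∏_{i∈I} X_i is h-homogeneously embedded in ∏_{i∈I} Z_i. -/
/-- The product of homeomorphisms onto subsets, as a homeomorphism onto the box. -/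
def piBoxHomeo {I : Type*} {Z : I → Type*} [∀ i, TopologicalSpace (Z i)]
    (U : ∀ i, Set (Z i)) (φ : ∀ i, Z i ≃ₜ U i) :
    (∀ i, Z i) ≃ₜ (Set.pi Set.univ U : Set (∀ i, Z i)) where
  toFun z := ⟨fun i => (φ i (z i) : Z i), fun i _ => (φ i (z i)).2⟩
  invFun w := fun i => (φ i).symm ⟨w.1 i, w.2 i (Set.mem_univ i)⟩
  left_inv z := by
    funext i
    simp
  right_inv w := by
    apply Subtype.ext
    funext i
    simp
  continuous_toFun := by
    refine Continuous.subtype_mk (continuous_pi fun i => ?_) _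
    exact continuous_subtype_val.comp ((φ i).continuous.comp (continuous_apply i))
  continuous_invFun := by
    refine continuous_pi fun i => (φ i).symm.continuous.comp ?_
    exact Continuous.subtype_mk ((continuous_apply i).comp continuous_subtype_val) _

theorem statement11 {I : Type*} [Countable I] {Z : I → Type*}
    [∀ i, TopologicalSpace (Z i)] [∀ i, TopologicalSpace.SeparableSpace (Z i)]
    [∀ i, TopologicalSpace.MetrizableSpace (Z i)]
    (X : ∀ i, Set (Z i)) (h : ∀ i, HHomEmbedded (X i)) :
    HHomEmbedded (Set.pi Set.univ X) := by
  classical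
  choose B hB hpi hφ using h
  refine ⟨{W | W.Nonempty ∧ ∃ (F : Finset I) (U : ∀ i, Set (Z i)), (∀ i ∈ F, U i ∈ B i) ∧
    (∀ i ∉ F, U i = Set.univ) ∧ W = Set.pi Set.univ U}, ?_, ?_, ?_⟩
  · rintro W ⟨hne, F, U, h1, h2, rfl⟩
    refine ⟨⟨isClosed_set_pi fun i _ => ?_, ?_⟩, hne⟩
    · by_cases hi : i ∈ F
      · exact (hB i _ (h1 i hi)).1.1
      · rw [h2 i hi]; exact isClosed_univ
    · have : Set.pi Set.univ U = Set.pi (F : Set I) U := by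
        ext z
        simp only [Set.mem_pi, Set.mem_univ, forall_true_left, Finset.mem_coe]
        refine ⟨fun hz i _ => hz i, fun hz i => ?_⟩
        by_cases hi : i ∈ F
        · exact hz i hi
        · rw [h2 i hi]; trivial
      rw [this]
      exact isOpen_set_pi F.finite_toSet fun i hi => (hB i _ (h1 i hi)).1.2
  · rintro V hV ⟨z, hz⟩
    obtain ⟨F, u, hu, huV⟩ := isOpen_pi_iff.1 hV z hz
    have key : ∀ i, ∃ S : Set (Z i), S.Nonempty ∧ (i ∈ F → S ∈ B i ∧ S ⊆ u i) ∧
        (i ∉ F → S = Set.univ) := by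
      intro i
      by_cases hi : i ∈ F
      · obtain ⟨S, hS, hSu⟩ := hpi i (u i) (hu i hi).1 ⟨z i, (hu i hi).2⟩
        exact ⟨S, (hB i S hS).2, fun _ => ⟨hS, hSu⟩, fun h => absurd hi h⟩
      · exact ⟨Set.univ, ⟨z i, trivial⟩, fun h => absurd h hi, fun _ => rfl⟩
    choose U hU0 hU1 hU2 using key
    refine ⟨Set.pi Set.univ U, ⟨Set.univ_pi_nonempty_iff.2 hU0, F, U,
      fun i hi => (hU1 i hi).1, hU2, rfl⟩, fun w hw => huV fun i hi => ?_⟩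
    exact (hU1 i hi).2 (hw i trivial)
  · rintro W ⟨-, F, U, h1, h2, rfl⟩
    have key : ∀ i, ∃ φ : Z i ≃ₜ U i, Subtype.val '' (⇑φ '' X i) = X i ∩ U i := by
      intro i
      by_cases hi : i ∈ F
      · exact hφ i _ (h1 i hi)
      · rw [h2 i hi]
        refine ⟨(Homeomorph.Set.univ (Z i)).symm, ?_⟩
        rw [Set.image_image, Set.inter_univ]
        exact Set.image_id' _
    choose φ hφ' using key
    refine ⟨piBoxHomeo U φ, ?_⟩
    ext w
    constructor
    · rintro ⟨_, ⟨x, hx, rfl⟩, rfl⟩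
      have : ∀ i, (φ i (x i) : Z i) ∈ X i ∩ U i := fun i => by
        rw [← hφ' i]
        exact ⟨_, ⟨x i, hx i trivial, rfl⟩, rfl⟩
      exact ⟨fun i _ => (this i).1, fun i _ => (this i).2⟩
    · rintro ⟨hwX, hwU⟩
      have : ∀ i, ∃ x ∈ X i, (φ i x : Z i) = w i := fun i => by
        have hm : w i ∈ X i ∩ U i := ⟨hwX i trivial, hwU i trivial⟩
        rw [← hφ' i] at hm
        obtain ⟨_, ⟨x, hx, rfl⟩, hxw⟩ := hm
        exact ⟨x, hx, hxw⟩
      choose x hx hxw using this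
      exact ⟨_, ⟨x, fun i _ => hx i, rfl⟩, funext hxw⟩
end

section
/- Let I be a countable set, and for each i ∈ I let X_i be a countably controlled separable metrizable space. Then the product ∏_{i∈I} X_i is countably controlled. -/
/-- If `I` is a countable set and, for each `i ∈ I`, `X i` is a countably
controlled separable metrizable space, then `∏_{i∈I} X i` is countably
controlled. -/
theorem statement12 {I : Type*} [Countable I] {X : I → Type*}
    [∀ i, TopologicalSpace (X i)] [∀ i, TopologicalSpace.SeparableSpace (X i)]
    [∀ i, TopologicalSpace.MetrizableSpace (X i)]
    (h : ∀ i, CountablyControlled (X i)) :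
    CountablyControlled (∀ i, X i) := by
  intro D hD
  choose G hG hP using fun i => h i ((fun f => f i) '' D) (hD.image _)
  haveI := hP
  refine ⟨{f | ∀ i, f i ∈ G i}, fun f hf i => hG i ⟨f, hf, rfl⟩, ?_⟩
  let e : {f : ∀ i, X i | ∀ i, f i ∈ G i} ≃ₜ (∀ i, G i) :=
    { toFun := fun f i => ⟨f.1 i, f.2 i⟩
      invFun := fun g => ⟨fun i => (g i).1, fun i => (g i).2⟩
      left_inv := fun f => rfl
      right_inv := fun g => rfl
      continuous_toFun := continuous_pi fun i =>
        ((continuous_apply i).comp continuous_subtype_val).subtype_mk _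
      continuous_invFun := (continuous_pi fun i =>
        continuous_subtype_val.comp (continuous_apply i)).subtype_mk _ }
  exact e.isClosedEmbedding.polishSpace
end

section
/- There exists a λ'-set X of cardinality ω₁ that is h-homogeneously embedded in the Cantor set 2^ω. -/
/-- A space is a λ-set if every countable subset is Gδ. -/
def IsLambdaSet (X : Type*) [TopologicalSpace X] : Prop :=
  ∀ D : Set X, D.Countable → IsGδ D

/-- A subspace `X` of the Cantor set `2^ω` is a λ'-set if `X ∪ D` is a λ-set
for every countable `D ⊆ 2^ω`. -/
def IsLambdaPrimeSet (X : Set (ℕ → Bool)) : Prop :=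
  ∀ D : Set (ℕ → Bool), D.Countable → IsLambdaSet ↥(X ∪ D)

set_option linter.unusedSectionVars false

open Set Topology

namespace LamPrime

/-! ### Part 1: tree orderings on an ω₁-like well order -/

section Tree

variable {Ω : Type} [LinearOrder Ω] [WellFoundedLT Ω]

/-- step function for the slow-moving index -/
noncomputable def idx (c : ℕ → Ω) (M : ℕ → ℕ → Set Ω) : ℕ → ℕ
  | 0 => 0
  | n + 1 => by
      classical
      exact if c (idx c M n) ∈ insert (c (idx c M n + 1)) (M (idx c M n + 1) (n + 1))
        then idx c M n + 1 else idx c M n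

theorem exists_L (c : (α : Ω) → (Iio α).Nonempty → ℕ → Iio α) :
    ∃ L : Ω → ℕ → Set Ω, ∀ α, (∀ h : (Iio α).Nonempty, ∀ n,
      L α n = insert ((c α h (idx (fun i => (c α h i : Ω)) (fun i => L (c α h i)) n) : Ω))
        (L (c α h (idx (fun i => (c α h i : Ω)) (fun i => L (c α h i)) n)) n)) ∧
      (¬ (Iio α).Nonempty → ∀ n, L α n = ∅) := by
  classical
  let F : (α : Ω) → ((β : Ω) → β < α → ℕ → Set Ω) → ℕ → Set Ω := fun α IH n =>
    if h : (Iio α).Nonempty then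
      insert ((c α h (idx (fun i => (c α h i : Ω)) (fun i => IH (c α h i) (c α h i).2) n) : Ω))
        (IH (c α h (idx (fun i => (c α h i : Ω)) (fun i => IH (c α h i) (c α h i).2) n))
          (c α h _).2 n)
    else ∅
  have wf : WellFounded (fun a b : Ω => a < b) := wellFounded_lt
  refine ⟨wf.fix F, fun α => ⟨fun h n => ?_, fun h n => ?_⟩⟩
  · rw [wf.fix_eq F α]
    simp only [F, dif_pos h]
  · rw [wf.fix_eq F α]
    simp only [F, dif_neg h]

structure Inv (L : Ω → ℕ → Set Ω) (α : Ω) : Prop where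
  sub : ∀ n, L α n ⊆ Iio α
  fin : ∀ n, (L α n).Finite
  mono : ∀ n, L α n ⊆ L α (n + 1)
  cov : ∀ ξ < α, ∃ n, ξ ∈ L α n
  coh : ∀ n, ∀ ξ ∈ L α n, L ξ n = L α n ∩ Iio ξ

theorem Inv.mono' {L : Ω → ℕ → Set Ω} {α : Ω} (h : Inv L α) {m n : ℕ} (hmn : m ≤ n) :
    L α m ⊆ L α n := monotone_nat_of_le_succ (f := L α) h.mono hmn

theorem exists_seq (hc : ∀ a : Ω, (Iio a).Countable) (α : Ω) (h : (Iio α).Nonempty) :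
    ∃ c : ℕ → Iio α, Monotone c ∧ ∀ ξ < α, ∃ i, ξ ≤ c i := by
  have := (hc α).to_subtype
  have : Nonempty (Iio α) := h.to_subtype
  obtain ⟨e, he⟩ := exists_surjective_nat (Iio α)
  refine ⟨partialSups e, (partialSups e).monotone, fun ξ hξ => ?_⟩
  obtain ⟨i, hi⟩ := he ⟨ξ, hξ⟩
  refine ⟨i, ?_⟩
  have := le_partialSups e i
  rw [hi] at this
  exact this

theorem exists_inv (hc : ∀ a : Ω, (Iio a).Countable) :
    ∃ L : Ω → ℕ → Set Ω, ∀ α, Inv L α := by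
  choose c cm cc using exists_seq hc
  obtain ⟨L, hL⟩ := exists_L c
  refine ⟨L, fun α => ?_⟩
  induction α using WellFoundedLT.induction with
  | ind α IH =>
  by_cases h : (Iio α).Nonempty
  swap
  · have hE := (hL α).2 h
    constructor
    · intro n; simp [hE]
    · intro n; simp [hE]
    · intro n; simp [hE]
    · intro ξ hξ; exact absurd ⟨ξ, hξ⟩ h
    · intro n ξ hξ; simp [hE] at hξ
  have hE := (hL α).1 h
  set d : ℕ → Ω := fun i => (c α h i : Ω) with hd
  set j := idx d (fun i => L (d i)) with hj
  have hE' : ∀ n, L α n = insert (d (j n)) (L (d (j n)) n) := hE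
  have dlt : ∀ i, d i < α := fun i => (c α h i).2
  have dmono : Monotone d := fun a b hab => cm α h hab
  have dI : ∀ i, Inv L (d i) := fun i => IH _ (dlt i)
  have js : ∀ n, j (n+1) = j n ∧ d (j n) ∉ insert (d (j n + 1)) (L (d (j n + 1)) (n + 1)) ∨
      j (n+1) = j n + 1 ∧ d (j n) ∈ insert (d (j n + 1)) (L (d (j n + 1)) (n + 1)) := by
    intro n
    by_cases hh : d (j n) ∈ insert (d (j n + 1)) (L (d (j n + 1)) (n + 1))
    · right
      refine ⟨?_, hh⟩
      rw [hj] at hh ⊢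
      simp only [idx]
      rw [if_pos hh]
    · left
      refine ⟨?_, hh⟩
      rw [hj] at hh ⊢
      simp only [idx]
      rw [if_neg hh]
  have hmono : ∀ n, L α n ⊆ L α (n + 1) := by
    intro n
    rw [hE', hE']
    rcases js n with ⟨h1, -⟩ | ⟨h1, h2⟩
    · rw [h1]
      exact insert_subset_insert ((dI _).mono n)
    · rw [h1]
      rcases h2 with h2 | h2
      · rw [← h2]
        exact insert_subset_insert ((dI _).mono n)
      · rw [insert_subset_iff]
        refine ⟨Or.inr h2, fun x hx => ?_⟩
        have := (dI _).coh _ _ h2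
        have hx' := (dI _).mono n hx
        rw [this] at hx'
        exact Or.inr hx'.1
  have hmono' : ∀ {m n : ℕ}, m ≤ n → L α m ⊆ L α n := fun hmn =>
    monotone_nat_of_le_succ (f := L α) hmono hmn
  have hcoh : ∀ n, ∀ ξ ∈ L α n, L ξ n = L α n ∩ Iio ξ := by
    intro n ξ hξ
    rw [hE'] at hξ ⊢
    rcases hξ with rfl | hξ
    · ext x
      constructor
      · intro hx; exact ⟨Or.inr hx, (dI _).sub _ hx⟩
      · rintro ⟨hx | hx, hx'⟩
        · exact absurd hx' (by rw [hx]; exact lt_irrefl _)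
        · exact hx
    · rw [(dI _).coh _ _ hξ]
      have h2 := (dI _).sub _ hξ
      ext x
      constructor
      · rintro ⟨h3, h4⟩; exact ⟨Or.inr h3, h4⟩
      · rintro ⟨h3 | h3, h4⟩
        · subst h3; exact absurd h4 (lt_asymm h2)
        · exact ⟨h3, h4⟩
  have jsurj : ∀ i, ∃ n, j n = i := by
    intro i
    induction i with
    | zero => exact ⟨0, rfl⟩
    | succ i ih =>
      obtain ⟨n, hn⟩ := ih
      by_contra! hcon
      have hst : ∀ m, j (n + m) = i := by
        intro m
        induction m with
        | zero => exact hn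
        | succ m ihm =>
          rcases js (n + m) with ⟨h1, -⟩ | ⟨h1, -⟩
          · rw [← add_assoc, h1, ihm]
          · rw [ihm] at h1
            exact absurd h1 (hcon _)
      have hev : ∃ m, d i ∈ insert (d (i + 1)) (L (d (i + 1)) (n + m + 1)) := by
        rcases (dmono (Nat.le_succ i)).eq_or_lt with h1 | h1
        · exact ⟨0, Or.inl h1⟩
        · obtain ⟨m, hm⟩ := (dI _).cov _ h1
          exact ⟨m, Or.inr ((dI _).mono' (by omega) hm)⟩
      obtain ⟨m, hm⟩ := hev
      rcases js (n + m) with ⟨-, h1⟩ | ⟨h1, -⟩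
      · rw [hst m] at h1; exact h1 hm
      · rw [hst m] at h1; exact hcon _ h1
  constructor
  · intro n
    rw [hE']
    exact insert_subset (dlt _) (((dI _).sub n).trans (Iio_subset_Iio (dlt _).le))
  · intro n
    rw [hE']
    exact ((dI _).fin n).insert _
  · exact hmono
  · intro ξ hξ
    obtain ⟨i, hi⟩ := cc α h ξ hξ
    obtain ⟨n, hn⟩ := jsurj i
    have hin : d i ∈ L α n := by rw [hE', hn]; exact Or.inl rfl
    have hi : ξ ≤ d i := hi
    rcases hi.eq_or_lt with h1 | h1
    · exact ⟨n, h1 ▸ hin⟩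
    · obtain ⟨m, hm⟩ := (dI i).cov _ h1
      refine ⟨max n m, ?_⟩
      have h2 := hcoh _ _ (hmono' (le_max_left n m) hin)
      have h3 := (dI i).mono' (le_max_right n m) hm
      rw [h2] at h3
      exact h3.1
  · exact hcoh

/-! ### Part 2: the decreasing Fσ sets -/

variable (L : Ω → ℕ → Set Ω)

noncomputable def rho (ξ α : Ω) : ℕ := sInf {n | ξ ∈ L α n}

noncomputable def pp (ξ : Ω) (n : ℕ) : ℕ := (L ξ n).ncard

def CC (ξ : Ω) (k : ℕ) : Set (ℕ → Bool) :=
  {g | ∀ n ≥ k, ∀ j, g (Nat.pair n (Nat.pair (pp L ξ n) j)) = decide (j = k)}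

def FF (α : Ω) : Set (ℕ → Bool) :=
  ⋃ n : ℕ, ⋂ ξ ∈ Iio α \ L α n, CC L ξ (rho L ξ α)

open Classical in
noncomputable def xx (α : Ω) : ℕ → Bool := fun t =>
  decide (∃ η ∈ L α t.unpair.1, pp L η t.unpair.1 = t.unpair.2.unpair.1 ∧
    rho L η α = t.unpair.2.unpair.2)

theorem isClosed_CC (ξ : Ω) (k : ℕ) : IsClosed (CC L ξ k) := by
  have : CC L ξ k = ⋂ (n : ℕ) (_ : n ≥ k) (j : ℕ),
      {g : ℕ → Bool | g (Nat.pair n (Nat.pair (pp L ξ n) j)) = decide (j = k)} := by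
    ext g; simp [CC]
  rw [this]
  refine isClosed_iInter fun n => isClosed_iInter fun _ => isClosed_iInter fun j => ?_
  exact isClosed_eq (continuous_apply _) continuous_const

theorem isGδ_compl_FF (α : Ω) : IsGδ (FF L α)ᶜ := by
  rw [FF, compl_iUnion]
  refine IsGδ.iInter_of_isOpen fun n => ?_
  rw [isOpen_compl_iff]
  exact isClosed_biInter fun ξ _ => isClosed_CC L ξ _

variable {L}

theorem mem_rho (hL : ∀ α, Inv L α) {ξ α : Ω} (h : ξ < α) : ξ ∈ L α (rho L ξ α) :=
  Nat.sInf_mem (s := {n | ξ ∈ L α n}) ((hL α).cov ξ h)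

theorem pp_lt (hL : ∀ α, Inv L α) {η ξ α : Ω} {n : ℕ} (hη : η ∈ L α n) (hξ : ξ ∈ L α n) (h : η < ξ) :
    pp L η n < pp L ξ n := by
  refine ncard_lt_ncard ?_ ((hL ξ).fin n)
  rw [(hL α).coh _ _ hη, (hL α).coh _ _ hξ]
  refine ⟨fun x hx => ⟨hx.1, lt_trans hx.2 h⟩, fun hh => ?_⟩
  exact lt_irrefl _ (hh ⟨hη, h⟩).2

theorem pp_inj (hL : ∀ α, Inv L α) {η ξ α : Ω} {n : ℕ} (hη : η ∈ L α n) (hξ : ξ ∈ L α n)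
    (h : pp L η n = pp L ξ n) : η = ξ := by
  rcases lt_trichotomy η ξ with h1 | h1 | h1
  · exact absurd h (pp_lt hL hη hξ h1).ne
  · exact h1
  · exact absurd h (pp_lt hL hξ hη h1).ne'

theorem xx_mem (hL : ∀ α, Inv L α) (α : Ω) : xx L α ∈ FF L α := by
  refine mem_iUnion.2 ⟨0, mem_iInter₂.2 fun ξ hξ => ?_⟩
  intro n hn j
  have hξα : ξ < α := hξ.1
  have hm : ξ ∈ L α n := (hL α).mono' hn (mem_rho hL hξα)
  unfold xx
  rw [decide_eq_decide]
  simp only [Nat.unpair_pair]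
  constructor
  · rintro ⟨η, hη, h1, h2⟩
    rw [← h2, pp_inj hL hη hm h1]
  · rintro rfl
    exact ⟨ξ, hm, rfl, rfl⟩

theorem FF_anti (hL : ∀ α, Inv L α) {α β : Ω} (h : α ≤ β) : FF L β ⊆ FF L α := by
  rcases h.eq_or_lt with rfl | h
  · exact le_rfl
  intro g hg
  obtain ⟨n, hn⟩ := mem_iUnion.1 hg
  obtain ⟨k, hk⟩ := (hL β).cov α h
  refine mem_iUnion.2 ⟨max n k, mem_iInter₂.2 fun ξ hξ => ?_⟩
  have hξα : ξ < α := hξ.1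
  have key : ∀ m ≥ k, (ξ ∈ L α m ↔ ξ ∈ L β m) := by
    intro m hm
    rw [(hL β).coh m α ((hL β).mono' hm hk)]
    exact ⟨fun h => h.1, fun h => ⟨h, hξα⟩⟩
  have hnβ : ξ ∉ L β (max n k) := by
    rw [← key _ (le_max_right _ _)]; exact hξ.2
  have heq : rho L ξ α = rho L ξ β := by
    unfold rho
    congr 1
    ext m
    rcases le_total k m with hm | hm
    · exact key m hm
    · constructor
      · intro h1
        exact absurd ((hL α).mono' (hm.trans (le_max_right _ _)) h1) hξ.2
      · intro h1
        exact absurd ((hL β).mono' (hm.trans (le_max_right _ _)) h1) hnβ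
  rw [heq]
  refine mem_iInter₂.1 hn ξ ⟨hξα.trans h, fun h1 => hnβ ((hL β).mono' (le_max_left _ _) h1)⟩

theorem exists_gt (hc : ∀ a : Ω, (Iio a).Countable) (hu : ¬ (univ : Set Ω).Countable)
    {T : Set Ω} (hT : T.Countable) : ∃ b, ∀ a ∈ T, a < b := by
  by_contra! hcon
  apply hu
  have : (⋃ a ∈ T, Iic a).Countable := by
    refine hT.biUnion fun a _ => ?_
    rw [← Iio_insert]
    exact (hc a).insert a
  refine this.mono fun b _ => ?_
  obtain ⟨a, ha, hb⟩ := hcon b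
  exact mem_iUnion₂.2 ⟨a, ha, hb⟩

theorem finite_of (hc : ∀ a : Ω, (Iio a).Countable) (hu : ¬ (univ : Set Ω).Countable)
    {T : Set Ω} (hT : ∀ a, (T ∩ Iio a).Finite) : T.Finite := by
  by_contra hinf
  have hinf' : T.Infinite := hinf
  have f := hinf'.natEmbedding
  have hr : (range (fun n => (f n : Ω))).Infinite :=
    infinite_range_of_injective (Subtype.val_injective.comp f.injective)
  obtain ⟨b, hb⟩ := exists_gt hc hu (countable_range (fun n => (f n : Ω)))
  refine hr ((hT b).subset ?_)
  rintro _ ⟨n, rfl⟩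
  exact ⟨(f n).2, hb _ ⟨n, rfl⟩⟩

theorem exists_notMem (hL : ∀ α, Inv L α) (hc : ∀ a : Ω, (Iio a).Countable) (hu : ¬ (univ : Set Ω).Countable)
    (g : ℕ → Bool) : ∃ α, g ∉ FF L α := by
  by_contra! hcon
  apply hu
  have hB : ∀ k, {ξ | g ∈ CC L ξ k}.Finite := by
    intro k
    refine finite_of hc hu fun α => ?_
    obtain ⟨n, hn⟩ := mem_iUnion.1 (hcon α)
    refine (((hL α).fin n).union ((hL α).fin k)).subset ?_
    rintro ξ ⟨h1, h2⟩
    by_cases h3 : ξ ∈ L α n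
    · exact Or.inl h3
    right
    have h4 := mem_iInter₂.1 hn ξ ⟨h2, h3⟩
    have h5 : rho L ξ α = k := by
      have h6 := h4 (max (rho L ξ α) k) (le_max_left _ _) k
      have h7 := h1 (max (rho L ξ α) k) (le_max_right _ _) k
      rw [h6] at h7
      simpa using (of_decide_eq_true (h7.trans (by simp))).symm
    rw [← h5]
    exact mem_rho hL h2
  have hN : {ξ | ∀ k, g ∉ CC L ξ k}.Finite := by
    refine finite_of hc hu fun α => ?_
    obtain ⟨n, hn⟩ := mem_iUnion.1 (hcon α)
    refine ((hL α).fin n).subset ?_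
    rintro ξ ⟨h1, h2⟩
    by_contra h3
    exact h1 _ (mem_iInter₂.1 hn ξ ⟨h2, h3⟩)
  refine ((countable_iUnion fun k => (hB k).countable).union hN.countable).mono fun ξ _ => ?_
  by_cases h : ∃ k, g ∈ CC L ξ k
  · exact Or.inl (mem_iUnion.2 h)
  · right; push Not at h; exact h

end Tree

/-! ### Part 3: the good sets -/

def Good (X : Set (ℕ → Bool)) : Prop :=
  ∀ D : Set (ℕ → Bool), D.Countable → ∃ G, IsGδ G ∧ D ⊆ G ∧ (X ∩ G).Countable

theorem exists_good : ∃ X : Set (ℕ → Bool), Good X ∧ Cardinal.mk X = Cardinal.aleph 1 := by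
  obtain ⟨Ω, i1, i2, hc, hcard⟩ : ∃ (Ω : Type) (_ : LinearOrder Ω) (_ : WellFoundedLT Ω),
      (∀ a : Ω, (Iio a).Countable) ∧ Cardinal.mk Ω = Cardinal.aleph 1 := by
    refine ⟨(Cardinal.aleph 1).ord.ToType, inferInstance, inferInstance, fun a => ?_, by simp⟩
    rw [← Cardinal.le_aleph0_iff_set_countable, ← Order.lt_succ_iff, Cardinal.succ_aleph0]
    simpa using Cardinal.mk_Iio_lt a
  have hu : ¬ (univ : Set Ω).Countable := by
    rw [← Cardinal.le_aleph0_iff_set_countable, Cardinal.mk_univ, hcard, not_le]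
    exact Cardinal.aleph0_lt_aleph_one
  obtain ⟨L, hL⟩ := exists_inv hc
  have hD : ∀ D : Set (ℕ → Bool), D.Countable → ∃ α, D ⊆ (FF L α)ᶜ := by
    intro D hD
    choose a ha using exists_notMem hL hc hu
    obtain ⟨b, hb⟩ := exists_gt hc hu (hD.image a)
    exact ⟨b, fun g hg hgb => ha g (FF_anti hL (hb _ (mem_image_of_mem a hg)).le hgb)⟩
  refine ⟨range (xx L), ?_, ?_⟩
  · intro D hDc
    obtain ⟨α, hα⟩ := hD D hDc
    refine ⟨_, isGδ_compl_FF L α, hα, ((hc α).image (xx L)).mono ?_⟩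
    rintro _ ⟨⟨β, rfl⟩, h2⟩
    refine ⟨β, ?_, rfl⟩
    by_contra h3
    exact h2 (FF_anti hL (not_lt.1 h3) (xx_mem hL β))
  · apply le_antisymm
    · rw [← hcard]; exact Cardinal.mk_range_le
    · rw [← Cardinal.succ_aleph0, Order.succ_le_iff, ← not_le,
        Cardinal.le_aleph0_iff_set_countable]
      intro h
      obtain ⟨α, hα⟩ := hD _ h
      exact hα ⟨α, rfl⟩ (xx_mem hL α)

theorem Good.isLambdaPrime {X : Set (ℕ → Bool)} (hX : Good X) : IsLambdaPrimeSet X := by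
  intro D hD C hC
  obtain ⟨G, hG, hDG, hXG⟩ := hX (D ∪ Subtype.val '' C) (hD.union (hC.image _))
  have hE : IsGδ ((Subtype.val : ↥(X ∪ D) → (ℕ → Bool)) ⁻¹' G) :=
    hG.preimage continuous_subtype_val
  have hEc : ((Subtype.val : ↥(X ∪ D) → (ℕ → Bool)) ⁻¹' G).Countable := by
    refine ((hXG.union hD).preimage Subtype.val_injective).mono ?_
    rintro ⟨x, hx | hx⟩ hxG
    · exact Or.inl ⟨hx, hxG⟩
    · exact Or.inr hx
  have hR := (hEc.mono (sdiff_subset (t := C))).isGδ_compl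
  convert hE.inter hR using 1
  ext x
  have : x ∈ C → x.1 ∈ G := fun h => hDG (Or.inr ⟨x, h, rfl⟩)
  simp only [mem_inter_iff, mem_preimage, mem_compl_iff, mem_sdiff]
  tauto

/-! ### Part 4: saturation under tail equivalence -/

def RR (x z : ℕ → Bool) : Prop := ∃ m n, ∀ k, x (k + m) = z (k + n)

theorem RR.symm {x z} (h : RR x z) : RR z x := by
  obtain ⟨m, n, h⟩ := h
  exact ⟨n, m, fun k => (h k).symm⟩

def hh (q : List Bool × ℕ) (y : ℕ → Bool) : ℕ → Bool := fun k =>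
  if k < q.1.length then q.1.getD k false else y (k - q.1.length + q.2)

theorem continuous_hh (q) : Continuous (hh q) := by
  refine continuous_pi fun k => ?_
  unfold hh
  split_ifs
  · exact continuous_const
  · exact continuous_apply _

theorem RR_iff {x z} : RR x z ↔ ∃ q, x = hh q z := by
  constructor
  · rintro ⟨m, n, h⟩
    refine ⟨⟨List.ofFn (fun i : Fin m => x i), n⟩, ?_⟩
    ext k
    simp only [hh, List.length_ofFn]
    split_ifs with hk
    · simp [List.getD, hk]
    · rw [← h]; congr 1; omega
  · rintro ⟨⟨p, n⟩, rfl⟩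
    exact ⟨p.length, n, fun k => by simp [hh]⟩

def sat (X : Set (ℕ → Bool)) : Set (ℕ → Bool) := {x | ∃ z ∈ X, RR x z}

theorem sat_eq (X) : sat X = ⋃ q, hh q '' X := by
  ext x
  simp only [sat, mem_ofPred_eq, RR_iff, mem_iUnion, mem_image]
  constructor
  · rintro ⟨z, hz, q, rfl⟩; exact ⟨q, z, hz, rfl⟩
  · rintro ⟨q, z, hz, rfl⟩; exact ⟨z, hz, q, rfl⟩

theorem Good.sat {X} (hX : Good X) : Good (sat X) := by
  intro D hD
  obtain ⟨G, hG, hDG, hXG⟩ := hX (⋃ q, hh q '' D) (countable_iUnion fun q => hD.image _)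
  refine ⟨⋂ q, hh q ⁻¹' G, IsGδ.iInter fun q => hG.preimage (continuous_hh q), ?_, ?_⟩
  · intro x hx
    exact mem_iInter.2 fun q => hDG (mem_iUnion.2 ⟨q, x, hx, rfl⟩)
  · refine (countable_iUnion fun q => hXG.image (hh q)).mono ?_
    rintro x ⟨⟨z, hz, hR⟩, hx⟩
    obtain ⟨q, rfl⟩ := RR_iff.1 hR
    obtain ⟨q', hq'⟩ := RR_iff.1 hR.symm
    refine mem_iUnion.2 ⟨q, z, ⟨hz, ?_⟩, rfl⟩
    rw [hq']
    exact mem_iInter.1 hx q'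

theorem mk_sat {X : Set (ℕ → Bool)} (hX : Cardinal.mk X = Cardinal.aleph 1) :
    Cardinal.mk (sat X) = Cardinal.aleph 1 := by
  apply le_antisymm
  · rw [sat_eq]
    refine (Cardinal.mk_iUnion_le _).trans ?_
    refine (mul_le_mul' (Cardinal.mk_le_aleph0) (ciSup_le' fun q => Cardinal.mk_image_le)).trans ?_
    rw [hX]
    exact (Cardinal.aleph0_mul_aleph 1).le
  · rw [← hX]
    refine Cardinal.mk_le_mk_of_subset fun x hx => ⟨x, hx, 0, 0, fun k => rfl⟩

def pre (x : ℕ → Bool) (n : ℕ) (y : ℕ → Bool) : ℕ → Bool := fun k =>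
  if k < n then x k else y (k - n)

theorem pre_mem_sat {X x n y} : pre x n y ∈ sat X ↔ y ∈ sat X := by
  constructor
  · rintro ⟨z, hz, m, l, h⟩
    refine ⟨z, hz, m, l + n, fun k => ?_⟩
    have := h (k + n)
    simp only [pre] at this
    rw [if_neg (by omega)] at this
    rw [show k + (l + n) = k + n + l by omega, ← this]
    congr 1; omega
  · rintro ⟨z, hz, m, l, h⟩
    refine ⟨z, hz, m + n, l, fun k => ?_⟩
    rw [← h]
    simp only [pre]
    rw [if_neg (by omega)]
    congr 1; omega

theorem isEmbedding_pre (x n) : IsEmbedding (pre x n) := by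
  refine Function.LeftInverse.isEmbedding (f := fun z k => z (k + n)) ?_ ?_ ?_
  · intro y; ext k; simp [pre]
  · exact continuous_pi fun k => continuous_apply _
  · refine continuous_pi fun k => ?_
    unfold pre
    split_ifs
    · exact continuous_const
    · exact continuous_apply _

theorem range_pre (x n) : range (pre x n) = {z | ∀ k < n, z k = x k} := by
  ext z
  constructor
  · rintro ⟨y, rfl⟩ k hk
    simp [pre, hk]
  · intro h
    refine ⟨fun k => z (k + n), ?_⟩
    ext k
    simp only [pre]
    split_ifs with hk
    · exact (h k hk).symm
    · congr 1; omega

theorem hhom_sat (X) : HHomEmbedded (sat X) := by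
  refine ⟨{U | ∃ x n, U = range (pre x n)}, ?_, ?_, ?_⟩
  · rintro _ ⟨x, n, rfl⟩
    refine ⟨⟨?_, ?_⟩, range_nonempty _⟩
    · exact (isCompact_range (isEmbedding_pre x n).continuous).isClosed
    · rw [range_pre]
      exact PiNat.isOpen_cylinder (fun _ => Bool) x n
  · rintro V hV ⟨x, hx⟩
    obtain ⟨I, u, hu, hI⟩ := isOpen_pi_iff.1 hV x hx
    refine ⟨_, ⟨x, I.sup id + 1, rfl⟩, ?_⟩
    rw [range_pre]
    intro z hz
    apply hI
    intro i hi
    rw [hz i (Nat.lt_succ_of_le (Finset.le_sup (f := id) hi))]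
    exact (hu i hi).2
  · rintro _ ⟨x, n, rfl⟩
    refine ⟨(isEmbedding_pre x n).toHomeomorph, ?_⟩
    ext z
    constructor
    · rintro ⟨_, ⟨y, hy, rfl⟩, rfl⟩
      exact ⟨pre_mem_sat.2 hy, ⟨y, rfl⟩⟩
    · rintro ⟨hz, ⟨y, rfl⟩⟩
      exact ⟨_, ⟨y, pre_mem_sat.1 hz, rfl⟩, rfl⟩

end LamPrime

/-- There exists a λ'-set of cardinality `ω₁` which is h-homogeneously embedded
in the Cantor set `2^ω`. -/
theorem statement13 :
    ∃ X : Set (ℕ → Bool), IsLambdaPrimeSet X ∧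
      Cardinal.mk X = Cardinal.aleph 1 ∧ HHomEmbedded X := by
  obtain ⟨X, hX, hcard⟩ := LamPrime.exists_good
  exact ⟨LamPrime.sat X, hX.sat.isLambdaPrime, LamPrime.mk_sat hcard, LamPrime.hhom_sat X⟩
end

section
/- There exists a subspace X of the Cantor set 2^ω such that X is not Polish and X^ω is countable dense homogeneous. -/
namespace CDHProof

open Set Topology Filter

/-- The Cantor set. -/
abbrev Cantor := ℕ → Bool

/-- Eventual equality. -/
def FE (x y : Cantor) : Prop := ∃ N, ∀ i, N ≤ i → x i = y i

lemma FE.refl (x : Cantor) : FE x x := ⟨0, fun _ _ => rfl⟩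

lemma FE.symm {x y : Cantor} (h : FE x y) : FE y x := by
  obtain ⟨N, hN⟩ := h
  exact ⟨N, fun i hi => (hN i hi).symm⟩

lemma FE.trans {x y z : Cantor} (h : FE x y) (h' : FE y z) : FE x z := by
  obtain ⟨N, hN⟩ := h
  obtain ⟨M, hM⟩ := h'
  exact ⟨max N M, fun i hi => (hN i (le_trans (le_max_left _ _) hi)).trans
    (hM i (le_trans (le_max_right _ _) hi))⟩

/-- Agreement below `n`. -/
def Ag (n : ℕ) (x y : Cantor) : Prop := ∀ i, i < n → x i = y i

lemma isOpen_ag (n : ℕ) (x : Cantor) : IsOpen {y | Ag n y x} :=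
  PiNat.isOpen_cylinder (fun _ => Bool) x n

lemma exists_ag_subset {U : Set Cantor} (hU : IsOpen U) {x : Cantor} (hx : x ∈ U) :
    ∃ n, ∀ y, Ag n y x → y ∈ U := by
  obtain ⟨v, ⟨z, n, rfl⟩, hxv, hvU⟩ :=
    (PiNat.isTopologicalBasis_cylinders (fun _ => Bool)).exists_subset_of_mem_open hx hU
  refine ⟨n, fun y hy => hvU ?_⟩
  intro i hi
  exact (hy i hi).trans (hxv i hi)

lemma continuous_of_ag {f : Cantor → Cantor}
    (hf : ∀ x n, ∃ m, ∀ y, Ag m y x → f y n = f x n) : Continuous f := by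
  refine continuous_pi fun n => ?_
  refine IsLocallyConstant.continuous ?_
  rw [IsLocallyConstant.iff_exists_open]
  intro x
  obtain ⟨m, hm⟩ := hf x n
  exact ⟨{y | Ag m y x}, isOpen_ag m x, fun _ _ => rfl, fun y hy => hm y hy⟩

open Classical in
/-- The point-pushing map. -/
noncomputable def push (p q x : Cantor) : Cantor := fun i =>
  if ∃ j < i, x j ≠ p j then x i else xor (x i) (xor (p i) (q i))

lemma push_self (p q : Cantor) : push p q p = q := by
  funext i
  simp [push]

lemma push_push (p q x : Cantor) : push q p (push p q x) = x := by
  have key : ∀ i, (∃ j < i, push p q x j ≠ q j) ↔ (∃ j < i, x j ≠ p j) := by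
    intro i
    constructor
    · rintro ⟨j, hj, hne⟩
      by_contra hcon
      push Not at hcon
      apply hne
      have h1 : ¬ ∃ k < j, x k ≠ p k := by
        push Not
        exact fun k hk => hcon k (hk.trans hj)
      simp only [push, if_neg h1]
      rw [hcon j hj]
      simp
    · intro h
      classical
      let j := Nat.find h
      obtain ⟨hj, hne⟩ : j < i ∧ x j ≠ p j := Nat.find_spec h
      refine ⟨j, hj, ?_⟩
      have h1 : ¬ ∃ k < j, x k ≠ p k := by
        rintro ⟨k, hk, hk'⟩
        exact Nat.find_min h hk ⟨hk.trans hj, hk'⟩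
      simp only [push, if_neg h1]
      revert hne
      cases x j <;> cases p j <;> cases q j <;> simp
  funext i
  by_cases h : ∃ j < i, x j ≠ p j
  · have h' := (key i).2 h
    rw [push, if_pos h', push, if_pos h]
  · have h' := fun h'' => h ((key i).1 h'')
    rw [push, if_neg h', push, if_neg h]
    cases x i <;> cases p i <;> cases q i <;> rfl

lemma push_continuous (p q : Cantor) : Continuous (push p q) := by
  apply continuous_of_ag
  intro x n
  refine ⟨n + 1, fun y hy => ?_⟩
  have : (∃ j < n, y j ≠ p j) ↔ (∃ j < n, x j ≠ p j) := by
    constructor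
    · rintro ⟨j, hj, h⟩
      exact ⟨j, hj, by rwa [← hy j (by omega)]⟩
    · rintro ⟨j, hj, h⟩
      exact ⟨j, hj, by rwa [hy j (by omega)]⟩
  simp only [push, this, hy n (by omega)]

lemma push_FE {p q x : Cantor} (h : x ≠ p) : FE (push p q x) x := by
  obtain ⟨j, hj⟩ := Function.ne_iff.1 h
  refine ⟨j + 1, fun i hi => ?_⟩
  rw [push, if_pos ⟨j, by omega, hj⟩]

lemma push_ag {p q x : Cantor} {m : ℕ} (hq : Ag m q p) : Ag m (push p q x) x := by
  intro i hi
  simp [push, hq i hi]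

lemma push_off {p q x : Cantor} {m : ℕ} (hq : Ag m q p) (hx : ¬ Ag m x p) : push p q x = x := by
  obtain ⟨j, hj, hne⟩ : ∃ j, j < m ∧ x j ≠ p j := by
    simpa [Ag] using hx
  funext i
  by_cases hi : i < m
  · exact push_ag hq i hi
  · rw [push, if_pos ⟨j, by omega, hne⟩]

/-- The point-pushing homeomorphism. -/
noncomputable def pushHomeo (p q : Cantor) : Cantor ≃ₜ Cantor where
  toFun := push p q
  invFun := push q p
  left_inv := push_push p q
  right_inv := push_push q p
  continuous_toFun := push_continuous p q
  continuous_invFun := push_continuous q p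

/-- Invariant of the back-and-forth construction. -/
structure Good (A B : Set Cantor) (h : Cantor ≃ₜ Cantor) (S : Set Cantor) : Prop where
  fin : S.Finite
  sub : S ⊆ A
  map : ∀ x ∈ S, h x ∈ B
  fe : ∀ x, x ∉ S → FE (h x) x

lemma Good.symm {A B : Set Cantor} {h : Cantor ≃ₜ Cantor} {S : Set Cantor} (g : Good A B h S) :
    Good B A h.symm (h '' S) := by
  refine ⟨g.fin.image _, ?_, ?_, ?_⟩
  · rintro _ ⟨x, hx, rfl⟩
    exact g.map x hx
  · rintro _ ⟨x, hx, rfl⟩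
    simpa using g.sub hx
  · intro y hy
    have := g.fe (h.symm y) (fun hs => hy ⟨_, hs, by simp⟩)
    simpa using this.symm

/-- Extension relation. -/
structure Ext (n : ℕ) (K : Set Cantor) (h : Cantor ≃ₜ Cantor) (S : Set Cantor)
    (h' : Cantor ≃ₜ Cantor) (S' : Set Cantor) : Prop where
  sub : S ⊆ S'
  fix : ∀ x, x ∈ S ∨ x ∈ K → h' x = h x
  fix' : ∀ y, y ∈ h '' S ∨ y ∈ K → h'.symm y = h.symm y
  ag : ∀ x, Ag n (h' x) (h x)
  ag' : ∀ y, Ag n (h'.symm y) (h.symm y)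

lemma Ext.symm {n K h S h' S'} (e : Ext n K h S h' S') :
    Ext n K h.symm (h '' S) h'.symm (Set.image h' S') := by
  refine ⟨?_, e.fix', ?_, e.ag', e.ag⟩
  · rintro _ ⟨x, hx, rfl⟩
    exact ⟨x, e.sub hx, e.fix x (Or.inl hx)⟩
  · intro y hy
    refine e.fix y (hy.imp_left ?_)
    rintro ⟨_, ⟨x, hx, rfl⟩, rfl⟩
    simpa using hx

lemma Ag.trans {n x y z} (h : Ag n x y) (h' : Ag n y z) : Ag n x z :=
  fun i hi => (h i hi).trans (h' i hi)

lemma Ag.mono {n m x y} (h : Ag n x y) (hm : m ≤ n) : Ag m x y :=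
  fun i hi => h i (by omega)

lemma Ag.symm {n x y} (h : Ag n x y) : Ag n y x :=
  fun i hi => (h i hi).symm

lemma Ext.trans {n K h S h' S' h'' S''} (e : Ext n K h S h' S') (e' : Ext n K h' S' h'' S'') :
    Ext n K h S h'' S'' := by
  refine ⟨e.sub.trans e'.sub, ?_, ?_, ?_, ?_⟩
  · intro x hx
    rw [e'.fix x (hx.imp_left (fun h => e.sub h)), e.fix x hx]
  · intro y hy
    rw [e'.fix' y (hy.imp_left (fun h => e.symm.sub h)), e.fix' y hy]
  · exact fun x => (e'.ag x).trans (e.ag x)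
  · exact fun x => (e'.ag' x).trans (e.ag' x)

lemma step {A B K : Set Cantor} (hK : IsClosed K) (hAK : ∀ a ∈ A, ∀ x, FE x a → x ∉ K)
    (hB : ∀ a ∈ A, ∀ p, FE p a → ∀ n, ∃ b ∈ B, Ag n b p)
    {h : Cantor ≃ₜ Cantor} {S : Set Cantor} (g : Good A B h S) (n : ℕ) {a : Cantor} (ha : a ∈ A) :
    ∃ h' S', Good A B h' S' ∧ Ext n K h S h' S' ∧ a ∈ S' := by
  by_cases haS : a ∈ S
  · exact ⟨h, S, g, ⟨Subset.rfl, fun _ _ => rfl, fun _ _ => rfl, fun _ _ _ => rfl,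
      fun _ _ _ => rfl⟩, haS⟩
  set p := h a with hp
  have hpa : FE p a := g.fe a haS
  let U : Set Cantor := ((h '' S)ᶜ ∩ Kᶜ) ∩ ((h '' K)ᶜ ∩ h '' {y | Ag n y a})
  have hU : IsOpen U := by
    refine IsOpen.inter (IsOpen.inter ?_ hK.isOpen_compl) (IsOpen.inter ?_ ?_)
    · exact (g.fin.image h).isClosed.isOpen_compl
    · exact (h.isClosedMap K hK).isOpen_compl
    · exact h.isOpenMap _ (isOpen_ag n a)
  have hpU : p ∈ U := by
    refine ⟨⟨?_, hAK a ha p hpa⟩, ⟨?_, ⟨a, fun _ _ => rfl, rfl⟩⟩⟩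
    · rintro ⟨x, hx, hxp⟩
      exact haS (h.injective hxp ▸ hx)
    · rintro ⟨x, hx, hxp⟩
      exact hAK a ha a (FE.refl a) (h.injective hxp ▸ hx)
  obtain ⟨m, hm⟩ := exists_ag_subset hU hpU
  obtain ⟨b, hbB, hb⟩ := hB a ha p hpa (max m n)
  have off : ∀ y, y ∉ U → push p b y = y := fun y hy =>
    push_off hb fun hc => hy (hm y (hc.mono (le_max_left _ _)))
  have off' : ∀ y, y ∉ U → push b p y = y := fun y hy => by
    conv_lhs => rw [← off y hy]
    exact push_push _ _ _
  have hh' : ∀ x, (h.trans (pushHomeo p b)) x = push p b (h x) := fun _ => rfl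
  have hh'' : ∀ x, (h.trans (pushHomeo p b)).symm x = h.symm (push b p x) := fun _ => rfl
  refine ⟨h.trans (pushHomeo p b), insert a S, ⟨g.fin.insert a, ?_, ?_, ?_⟩,
    ⟨subset_insert _ _, ?_, ?_, ?_, ?_⟩, mem_insert _ _⟩
  · exact insert_subset ha g.sub
  · rintro x (rfl | hx)
    · rw [hh', ← hp, push_self]
      exact hbB
    · rw [hh', off _ (fun hc => hc.1.1 ⟨x, hx, rfl⟩)]
      exact g.map x hx
  · intro x hx
    rw [hh']
    have h1 : x ≠ a := fun e => hx (Or.inl e)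
    exact (push_FE (fun e => h1 (h.injective e))).trans (g.fe x (fun e => hx (Or.inr e)))
  · rintro x (hx | hx)
    · rw [hh', off _ (fun hc => hc.1.1 ⟨x, hx, rfl⟩)]
    · rw [hh', off _ (fun hc => hc.2.1 ⟨x, hx, rfl⟩)]
  · rintro y (hy | hy)
    · rw [hh'', off' _ (fun hc => hc.1.1 hy)]
    · rw [hh'', off' _ (fun hc => hc.1.2 hy)]
  · intro x
    rw [hh']
    exact (push_ag hb).mono (le_max_right _ _)
  · intro y
    rw [hh'']
    by_cases hy : Ag (max m n) y p
    · have hy2 : Ag (max m n) (push b p y) p := (push_ag hb.symm).trans hy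
      have key : ∀ z, Ag (max m n) z p → Ag n (h.symm z) a := by
        intro z hz
        obtain ⟨w, hw, rfl⟩ := (hm z (hz.mono (le_max_left _ _))).2.2
        simpa using hw
      exact (key _ hy2).trans (key _ hy).symm
    · rw [push_off hb.symm (fun hc => hy (hc.trans hb))]
      exact fun _ _ => rfl

lemma step2 {A B K : Set Cantor} (hK : IsClosed K) (hAK : ∀ a ∈ A, ∀ x, FE x a → x ∉ K)
    (hBK : ∀ a ∈ B, ∀ x, FE x a → x ∉ K)
    (hB : ∀ a ∈ A, ∀ p, FE p a → ∀ n, ∃ b ∈ B, Ag n b p)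
    (hA : ∀ a ∈ B, ∀ p, FE p a → ∀ n, ∃ b ∈ A, Ag n b p)
    {h : Cantor ≃ₜ Cantor} {S : Set Cantor} (g : Good A B h S) (n : ℕ) {a b : Cantor}
    (ha : a ∈ A) (hb : b ∈ B) :
    ∃ h' S', Good A B h' S' ∧ Ext n K h S h' S' ∧ a ∈ S' ∧ b ∈ Set.image h' S' := by
  obtain ⟨h1, S1, g1, e1, ha1⟩ := step hK hAK hB g n ha
  obtain ⟨k, T, g2, e2, hb2⟩ := step hK hBK hA g1.symm n hb
  have e3 := e2.symm
  have himg : h1.symm '' (h1 '' S1) = S1 := by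
    rw [← image_comp]; simp
  rw [himg, Homeomorph.symm_symm] at e3
  refine ⟨k.symm, k '' T, g2.symm, e1.trans e3, e3.sub ha1, ?_⟩
  exact ⟨k b, ⟨b, hb2, rfl⟩, by simp⟩

end CDHProof
namespace CDHProof

open Set Topology Filter

/-- Countable sets in `Z` can be separated from the complement of `Z`. -/
def CC (Z : Set Cantor) : Prop :=
  ∀ D : Set Cantor, D ⊆ Z → D.Countable →
    ∃ S : Set (Set Cantor), S.Countable ∧ (∀ F ∈ S, IsClosed F ∧ Disjoint D F) ∧ Zᶜ ⊆ ⋃₀ S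

lemma countable_FE (D : Set Cantor) (hD : D.Countable) : {x | ∃ d ∈ D, FE x d}.Countable := by
  have : {x | ∃ d ∈ D, FE x d} ⊆
      ⋃ d ∈ D, range (fun s : Finset ℕ => fun i => if i ∈ s then !(d i) else d i) := by
    rintro x ⟨d, hd, N, hN⟩
    simp only [mem_iUnion]
    refine ⟨d, hd, (Finset.range N).filter (fun i => x i ≠ d i), ?_⟩
    funext i
    by_cases h : x i = d i
    · simp [h]
    · have : i < N := by
        by_contra hc
        exact h (hN i (by omega))
      simp only [Finset.mem_filter, Finset.mem_range, this, true_and, ne_eq, h, not_false_eq_true,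
        if_true]
      revert h
      cases x i <;> cases d i <;> simp
  exact (hD.biUnion fun d _ => countable_range _).mono this

lemma CC.seq {Z : Set Cantor} (h : CC Z) {D : Set Cantor} (hD : D ⊆ Z) (hc : D.Countable) :
    ∃ K : ℕ → Set Cantor, Monotone K ∧ (∀ n, IsClosed (K n)) ∧ (∀ n, Disjoint D (K n)) ∧
      Zᶜ ⊆ ⋃ n, K n := by
  obtain ⟨S, hS, hF, hZ⟩ := h D hD hc
  have hS' : (insert ∅ S).Countable := hS.insert _
  obtain ⟨f, hf⟩ := hS'.exists_eq_range (insert_nonempty _ _)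
  have hprop : ∀ n, IsClosed (f n) ∧ Disjoint D (f n) := by
    intro n
    have : f n ∈ insert ∅ S := hf ▸ mem_range_self n
    rcases this with h | h
    · rw [h]; simp
    · exact hF _ h
  refine ⟨fun n => ⋃ i ∈ Finset.range (n + 1), f i, ?_, ?_, ?_, ?_⟩
  · intro n m hnm x hx
    simp only [mem_iUnion, Finset.mem_range] at hx ⊢
    obtain ⟨i, hi, hx⟩ := hx
    exact ⟨i, by omega, hx⟩
  · intro n
    exact isClosed_biUnion_finset fun i _ => (hprop i).1
  · intro n
    simp only [disjoint_iUnion_right]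
    exact fun i _ => (hprop i).2
  · intro x hx
    obtain ⟨F, hFS, hxF⟩ := hZ hx
    have : F ∈ range f := hf ▸ mem_insert_of_mem _ hFS
    obtain ⟨n, rfl⟩ := this
    simp only [mem_iUnion, Finset.mem_range]
    exact ⟨n, n, by omega, hxF⟩

lemma seq_stable (f : ℕ → Cantor) (hf : ∀ n, Ag n (f (n + 1)) (f n)) (i n : ℕ) (hn : i + 1 ≤ n) :
    f n i = f (i + 1) i := by
  induction n, hn using Nat.le_induction with
  | base => rfl
  | succ n hn ih => rw [hf n i (by omega), ih]

lemma main_cantor {Z : Set Cantor} (hfin : ∀ x y, FE x y → x ∈ Z → y ∈ Z) (hcc : CC Z)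
    {A B : Set Cantor} (hAZ : A ⊆ Z) (hBZ : B ⊆ Z) (hAc : A.Countable) (hBc : B.Countable)
    (hAn : A.Nonempty) (hBn : B.Nonempty)
    (hAd : ∀ p ∈ Z, ∀ n, ∃ b ∈ A, Ag n b p) (hBd : ∀ p ∈ Z, ∀ n, ∃ b ∈ B, Ag n b p) :
    ∃ h : Cantor ≃ₜ Cantor, h '' A = B ∧ ∀ x, h x ∈ Z ↔ x ∈ Z := by
  obtain ⟨K, hKm, hKc, hKd, hKZ⟩ := hcc.seq (D := {x | ∃ d ∈ A ∪ B, FE x d})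
    (by
      rintro x ⟨d, hd, hx⟩
      exact hfin d x hx.symm (union_subset hAZ hBZ hd))
    (countable_FE _ (hAc.union hBc))
  have hAK : ∀ n, ∀ a ∈ A, ∀ x, FE x a → x ∉ K n := fun n a ha x hx hxK =>
    disjoint_left.1 (hKd n) ⟨a, Or.inl ha, hx⟩ hxK
  have hBK : ∀ n, ∀ a ∈ B, ∀ x, FE x a → x ∉ K n := fun n a ha x hx hxK =>
    disjoint_left.1 (hKd n) ⟨a, Or.inr ha, hx⟩ hxK
  obtain ⟨a, ha⟩ := hAc.exists_eq_range hAn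
  obtain ⟨b, hb⟩ := hBc.exists_eq_range hBn
  let T := {s : (Cantor ≃ₜ Cantor) × Set Cantor // Good A B s.1 s.2}
  have hstep : ∀ (n : ℕ) (s : T), ∃ s' : T, Ext n (K n) s.1.1 s.1.2 s'.1.1 s'.1.2 ∧
      a n ∈ s'.1.2 ∧ b n ∈ s'.1.1 '' s'.1.2 := by
    rintro n ⟨⟨h, S⟩, g⟩
    obtain ⟨h', S', g', e, h1, h2⟩ := step2 (hKc n) (hAK n) (hBK n)
      (fun a ha p hp n => hBd p (hfin a p hp.symm (hAZ ha)) n)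
      (fun a ha p hp n => hAd p (hfin a p hp.symm (hBZ ha)) n) g n
      (a := a n) (b := b n) (ha ▸ mem_range_self n) (hb ▸ mem_range_self n)
    exact ⟨⟨⟨h', S'⟩, g'⟩, e, h1, h2⟩
  choose nxt hext hna hnb using hstep
  let s0 : T := ⟨⟨Homeomorph.refl _, ∅⟩,
    ⟨finite_empty, empty_subset _, fun x hx => hx.elim, fun x _ => FE.refl x⟩⟩
  let s : ℕ → T := fun n => Nat.rec s0 nxt n
  have hs : ∀ n, s (n + 1) = nxt n (s n) := fun n => rfl
  let H : ℕ → (Cantor ≃ₜ Cantor) := fun n => (s n).1.1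
  let S : ℕ → Set Cantor := fun n => (s n).1.2
  have good : ∀ n, Good A B (H n) (S n) := fun n => (s n).2
  have ext : ∀ n, Ext n (K n) (H n) (S n) (H (n + 1)) (S (n + 1)) := fun n => hext n (s n)
  have haS : ∀ n, a n ∈ S (n + 1) := fun n => hna n (s n)
  have hbS : ∀ n, b n ∈ H (n + 1) '' S (n + 1) := fun n => hnb n (s n)
  let h : Cantor → Cantor := fun x i => H (i + 1) x i
  let k : Cantor → Cantor := fun x i => (H (i + 1)).symm x i
  have hst : ∀ x i n, i + 1 ≤ n → H n x i = h x i := fun x i n hn =>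
    seq_stable (fun n => H n x) (fun n => (ext n).ag x) i n hn
  have kst : ∀ x i n, i + 1 ≤ n → (H n).symm x i = k x i := fun x i n hn =>
    seq_stable (fun n => (H n).symm x) (fun n => (ext n).ag' x) i n hn
  have contAux : ∀ (f : Cantor ≃ₜ Cantor) (x : Cantor) (n : ℕ),
      ∃ m, ∀ y, Ag m y x → f y n = f x n := by
    intro f x n
    obtain ⟨m, hm⟩ := exists_ag_subset ((isOpen_ag (n + 1) (f x)).preimage f.continuous)
      (x := x) (fun _ _ => rfl)
    exact ⟨m, fun y hy => hm y hy n (by omega)⟩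
  have hcont : Continuous h := continuous_of_ag fun x n => contAux (H (n + 1)) x n
  have kcont : Continuous k := continuous_of_ag fun x n => contAux (H (n + 1)).symm x n
  have hk : ∀ y, h (k y) = y := by
    intro y
    funext i
    obtain ⟨m, hm⟩ := exists_ag_subset
      ((isOpen_ag (i + 1) (h (k y))).preimage hcont) (x := k y) (fun _ _ => rfl)
    have h1 := hm ((H (max (i + 1) m)).symm y) (fun j hj => kst y j _ (by omega)) i (by omega)
    rw [← h1, ← hst _ i (max (i + 1) m) (by omega)]
    simp
  have kh : ∀ y, k (h y) = y := by
    intro y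
    funext i
    obtain ⟨m, hm⟩ := exists_ag_subset
      ((isOpen_ag (i + 1) (k (h y))).preimage kcont) (x := h y) (fun _ _ => rfl)
    have h1 := hm ((H (max (i + 1) m)) y) (fun j hj => hst y j _ (by omega)) i (by omega)
    rw [← h1, ← kst _ i (max (i + 1) m) (by omega)]
    simp
  have stabK : ∀ n x, x ∈ K n → h x = H n x := by
    intro n x hx
    have h1 : ∀ m, n ≤ m → H m x = H n x := by
      intro m hm
      induction m, hm using Nat.le_induction with
      | base => rfl
      | succ m hm ih => rw [(ext m).fix x (Or.inr (hKm hm hx)), ih]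
    funext i
    rw [← hst x i (max (i + 1) n) (by omega), h1 _ (by omega)]
  have stabK' : ∀ n x, x ∈ K n → k x = (H n).symm x := by
    intro n x hx
    have h1 : ∀ m, n ≤ m → (H m).symm x = (H n).symm x := by
      intro m hm
      induction m, hm using Nat.le_induction with
      | base => rfl
      | succ m hm ih => rw [(ext m).fix' x (Or.inr (hKm hm hx)), ih]
    funext i
    rw [← kst x i (max (i + 1) n) (by omega), h1 _ (by omega)]
  have Smono : ∀ n m, n ≤ m → S n ⊆ S m := by
    intro n m hm
    induction m, hm using Nat.le_induction with
    | base => exact Subset.rfl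
    | succ m hm ih => exact ih.trans (ext m).sub
  have stabS : ∀ n x, x ∈ S n → h x = H n x := by
    intro n x hx
    have h1 : ∀ m, n ≤ m → H m x = H n x := by
      intro m hm
      induction m, hm using Nat.le_induction with
      | base => rfl
      | succ m hm ih => rw [(ext m).fix x (Or.inl (Smono n m hm hx)), ih]
    funext i
    rw [← hst x i (max (i + 1) n) (by omega), h1 _ (by omega)]
  have feK : ∀ n x, x ∈ K n → FE (h x) x := by
    intro n x hx
    rw [stabK n x hx]
    exact (good n).fe x fun hxS => hAK n x ((good n).sub hxS) x (FE.refl x) hx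
  have feK' : ∀ n y, y ∈ K n → FE (k y) y := by
    intro n y hy
    rw [stabK' n y hy]
    refine (good n).symm.fe y fun hyS => hBK n y ?_ y (FE.refl y) hy
    exact (good n).symm.sub hyS
  refine ⟨⟨⟨h, k, kh, hk⟩, hcont, kcont⟩, ?_, ?_⟩
  · ext y
    constructor
    · rintro ⟨x, hx, rfl⟩
      rw [ha] at hx
      obtain ⟨n, rfl⟩ := hx
      change h (a n) ∈ B
      rw [stabS (n + 1) _ (haS n)]
      exact (good (n + 1)).map _ (haS n)
    · intro hy
      rw [hb] at hy
      obtain ⟨n, rfl⟩ := hy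
      obtain ⟨x, hx, hxb⟩ := hbS n
      exact ⟨x, (good (n + 1)).sub hx, (stabS (n + 1) x hx).trans hxb⟩
  · intro x
    change h x ∈ Z ↔ x ∈ Z
    constructor
    · intro hx
      by_contra hxZ
      obtain ⟨n, hn⟩ := mem_iUnion.1 (hKZ hxZ)
      exact hxZ (hfin _ _ (feK n x hn) hx)
    · intro hx
      by_contra hxZ
      obtain ⟨n, hn⟩ := mem_iUnion.1 (hKZ hxZ)
      have := feK' n (h x) hn
      rw [kh] at this
      exact hxZ (hfin _ _ this hx)

lemma cdh_of_CC {Z : Set Cantor} (hfin : ∀ x y, FE x y → x ∈ Z → y ∈ Z) (hcc : CC Z) :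
    IsCDH Z := by
  intro A B hAc hAd hBc hBd
  by_cases hZ : IsEmpty Z
  · refine ⟨Homeomorph.refl _, ?_⟩
    ext x
    exact hZ.elim x
  rw [not_isEmpty_iff] at hZ
  have dense_aux : ∀ D : Set Z, Dense D → ∀ p ∈ Z, ∀ n, ∃ b ∈ Subtype.val '' D, Ag n b p := by
    intro D hD p hp n
    obtain ⟨d, hdU, hd⟩ := hD.exists_mem_open
      ((isOpen_ag n p).preimage continuous_subtype_val) ⟨⟨p, hp⟩, fun _ _ => rfl⟩
    exact ⟨d, ⟨d, hdU, rfl⟩, hd⟩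
  obtain ⟨h, hAB, hhZ⟩ := main_cantor hfin hcc (A := Subtype.val '' A) (B := Subtype.val '' B)
    (by rintro _ ⟨x, _, rfl⟩; exact x.2) (by rintro _ ⟨x, _, rfl⟩; exact x.2)
    (hAc.image _) (hBc.image _) (hAd.nonempty.image _) (hBd.nonempty.image _)
    (dense_aux A hAd) (dense_aux B hBd)
  refine ⟨h.subtype (fun x => (hhZ x).symm), ?_⟩
  ext y
  constructor
  · rintro ⟨x, hx, rfl⟩
    have : h x ∈ Subtype.val '' B := hAB ▸ ⟨x, ⟨x, hx, rfl⟩, rfl⟩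
    obtain ⟨z, hz, hzx⟩ := this
    convert hz
    exact Subtype.ext hzx.symm
  · intro hy
    have : (y : Cantor) ∈ h '' (Subtype.val '' A) := hAB ▸ ⟨y, hy, rfl⟩
    obtain ⟨_, ⟨x, hx, rfl⟩, hxy⟩ := this
    exact ⟨x, hx, Subtype.ext hxy⟩

lemma isCDH_of_homeo {X Y : Type*} [TopologicalSpace X] [TopologicalSpace Y] (e : X ≃ₜ Y)
    (h : IsCDH Y) : IsCDH X := by
  intro A B hAc hAd hBc hBd
  obtain ⟨f, hf⟩ := h (e '' A) (e '' B) (hAc.image _)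
    (e.surjective.denseRange.dense_image e.continuous hAd) (hBc.image _)
    (e.surjective.denseRange.dense_image e.continuous hBd)
  refine ⟨(e.trans f).trans e.symm, ?_⟩
  have : ((e.trans f).trans e.symm : X → X) '' A = e.symm '' (f '' (e '' A)) := by
    rw [← image_comp, ← image_comp]
    rfl
  rw [this, hf, ← image_comp]
  simp

/-- The power of a set, coded in the Cantor set. -/
def pw (X : Set Cantor) : Set Cantor := {z | ∀ i, (fun j => z (Nat.pair i j)) ∈ X}

/-- Coding homeomorphism. -/
def pwHomeo (X : Set Cantor) : (ℕ → X) ≃ₜ pw X where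
  toFun f := ⟨fun n => (f n.unpair.1 : Cantor) n.unpair.2, fun i => by
    simp⟩
  invFun z := fun i => ⟨fun j => z.1 (Nat.pair i j), z.2 i⟩
  left_inv f := by
    funext i
    apply Subtype.ext
    funext j
    simp
  right_inv z := by
    apply Subtype.ext
    funext n
    simp
  continuous_toFun := by
    refine Continuous.subtype_mk (continuous_pi fun n => ?_) _
    exact (continuous_apply _).comp (continuous_subtype_val.comp (continuous_apply _))
  continuous_invFun := by
    refine continuous_pi fun i => Continuous.subtype_mk (continuous_pi fun j => ?_) _
    exact (continuous_apply _).comp continuous_subtype_val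

lemma pw_fin {X : Set Cantor} (hfin : ∀ x y, FE x y → x ∈ X → y ∈ X) :
    ∀ x y, FE x y → x ∈ pw X → y ∈ pw X := by
  rintro x y ⟨N, hN⟩ hx i
  refine hfin _ _ ⟨N, fun j hj => ?_⟩ (hx i)
  exact hN _ (hj.trans (Nat.right_le_pair i j))

lemma pw_CC {X : Set Cantor} (hcc : CC X) : CC (pw X) := by
  intro D hD hDc
  let π : ℕ → Cantor → Cantor := fun i z j => z (Nat.pair i j)
  have hπ : ∀ i, Continuous (π i) := fun i => continuous_pi fun j => continuous_apply _
  obtain ⟨S, hS, hF, hX⟩ := hcc (⋃ i, π i '' D)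
    (by
      simp only [iUnion_subset_iff]
      rintro i _ ⟨z, hz, rfl⟩
      exact hD hz i)
    (countable_iUnion fun i => hDc.image _)
  refine ⟨⋃ i, (fun F => π i ⁻¹' F) '' S, countable_iUnion fun i => hS.image _, ?_, ?_⟩
  · intro F hFm
    obtain ⟨i, F, hFS, rfl⟩ := mem_iUnion.1 hFm
    refine ⟨(hF F hFS).1.preimage (hπ i), ?_⟩
    rw [disjoint_left]
    intro z hz hzF
    exact disjoint_left.1 (hF F hFS).2 (mem_iUnion.2 ⟨i, z, hz, rfl⟩) hzF
  · intro z hz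
    have : ∃ i, π i z ∉ X := by
      by_contra hcon
      push Not at hcon
      exact hz hcon
    obtain ⟨i, hi⟩ := this
    obtain ⟨F, hFS, hzF⟩ := hX hi
    exact ⟨π i ⁻¹' F, mem_iUnion.2 ⟨i, F, hFS, rfl⟩, hzF⟩

lemma cdh_power {X : Set Cantor} (hfin : ∀ x y, FE x y → x ∈ X → y ∈ X) (hcc : CC X) :
    IsCDH (ℕ → X) :=
  isCDH_of_homeo (pwHomeo X) (cdh_of_CC (pw_fin hfin) (pw_CC hcc))

end CDHProof
namespace CDHProof

open Set Topology Filter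

section rho

variable {Ω : Type} [LinearOrder Ω] [WellFoundedLT Ω]

/-- The control sequence. -/
def nu (g : ℕ → ℕ) : ℕ → ℕ
  | 0 => 0
  | k + 1 => max (nu g k + 1) (g k)

lemma nu_ge (g : ℕ → ℕ) (k : ℕ) : k ≤ nu g k := by
  induction k with
  | zero => exact Nat.zero_le _
  | succ k ih =>
    have : nu g k + 1 ≤ nu g (k + 1) := le_max_left _ _
    omega

lemma nu_mono_succ (g : ℕ → ℕ) (k : ℕ) : nu g k ≤ nu g (k + 1) :=
  le_trans (Nat.le_succ _) (le_max_left _ _)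

open Classical in
/-- Step of the recursion. -/
noncomputable def rhoStep (c : Ω → ℕ → Ω) (β : Ω) (ih : ∀ γ, γ < β → Ω → ℕ) : Ω → ℕ :=
  let r : ℕ → Ω → ℕ := fun k => if h : c β k < β then ih (c β k) h else fun _ => 0
  fun ξ => if ξ < β then
    sInf {n | ∃ k, nu (fun j => r (j + 1) (c β j)) k ≤ n ∧ ξ ≤ c β k ∧ r k ξ ≤ n} else 0

/-- A subadditive function on pairs. -/
noncomputable def rho (c : Ω → ℕ → Ω) : Ω → Ω → ℕ :=
  (wellFounded_lt (α := Ω)).fix (rhoStep c)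

lemma rho_eq (c : Ω → ℕ → Ω) (β : Ω) : rho c β = rhoStep c β (fun γ _ => rho c γ) :=
  WellFounded.fix_eq _ _ _

/-- The n-th tree order (reflexive version). -/
def L (c : Ω → ℕ → Ω) (n : ℕ) (ξ β : Ω) : Prop := ξ ≤ β ∧ rho c β ξ ≤ n

lemma rho_self (c : Ω → ℕ → Ω) (β : Ω) : rho c β β = 0 := by
  rw [rho_eq]; simp [rhoStep]

lemma L_self (c : Ω → ℕ → Ω) (n : ℕ) (β : Ω) : L c n β β :=
  ⟨le_rfl, by rw [rho_self]; exact Nat.zero_le _⟩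

/-- Requirements for the ladder system. -/
structure Ladder (c : Ω → ℕ → Ω) : Prop where
  lt : ∀ β ξ, ξ < β → ∀ k, c β k < β
  mono : ∀ β, Monotone (c β)
  cof : ∀ β ξ, ξ < β → ∃ k, ξ ≤ c β k

/-- The control sequence at `β`. -/
noncomputable def nuAt (c : Ω → ℕ → Ω) (β : Ω) : ℕ → ℕ :=
  nu (fun j => rho c (c β (j + 1)) (c β j))

lemma L_iff {c : Ω → ℕ → Ω} (hc : Ladder c) {n : ℕ} {ξ β : Ω} (h : ξ < β) :
    L c n ξ β ↔ ∃ k, nuAt c β k ≤ n ∧ L c n ξ (c β k) := by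
  have hr : ∀ k, c β k < β := hc.lt β ξ h
  have e : rho c β ξ = sInf {n | ∃ k, nuAt c β k ≤ n ∧ L c n ξ (c β k)} := by
    rw [rho_eq]
    simp [rhoStep, hr, h, nuAt, L]
  have hne : {n | ∃ k, nuAt c β k ≤ n ∧ L c n ξ (c β k)}.Nonempty := by
    obtain ⟨k, hk⟩ := hc.cof β ξ h
    exact ⟨max (nuAt c β k) (rho c (c β k) ξ), k, le_max_left _ _, hk, le_max_right _ _⟩
  constructor
  · rintro ⟨_, h2⟩
    obtain ⟨k, hk1, hk2, hk3⟩ := Nat.sInf_mem hne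
    rw [← e] at hk1 hk3
    exact ⟨k, hk1.trans h2, hk2, hk3.trans h2⟩
  · intro hk
    exact ⟨h.le, by rw [e]; exact Nat.sInf_le hk⟩

/-- Inductive invariants. -/
structure Inv (c : Ω → ℕ → Ω) (β : Ω) : Prop where
  a : ∀ n ξ α, L c n ξ α → L c n α β → L c n ξ β
  b : ∀ n ξ α, ξ ≤ α → L c n ξ β → L c n α β → L c n ξ α
  fin : ∀ n, {ξ | L c n ξ β}.Finite

lemma inv {c : Ω → ℕ → Ω} (hc : Ladder c) (β : Ω) : Inv c β := by
  induction β using WellFoundedLT.induction with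
  | ind β ih =>
  have chain : ∀ ξ, ξ < β → ∀ n k l, k ≤ l → nuAt c β l ≤ n → L c n (c β k) (c β l) := by
    intro ξ hξ n k l hkl
    induction l, hkl using Nat.le_induction with
    | base => exact fun _ => L_self c n _
    | succ l hl ihl =>
      intro hn
      refine (ih _ (hc.lt β ξ hξ _)).a n _ (c β l) (ihl ((nu_mono_succ _ _).trans hn)) ?_
      refine ⟨hc.mono β (Nat.le_succ l), le_trans ?_ hn⟩
      exact le_max_right _ _
  refine ⟨?_, ?_, ?_⟩
  · intro n ξ α h1 h2
    rcases h2.1.eq_or_lt with rfl | hlt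
    · exact h1
    obtain ⟨k, hk, hk'⟩ := (L_iff hc hlt).1 h2
    exact (L_iff hc (h1.1.trans_lt hlt)).2 ⟨k, hk, (ih _ (hc.lt β α hlt k)).a n _ _ h1 hk'⟩
  · intro n ξ α hle h1 h2
    rcases h2.1.eq_or_lt with rfl | hlt
    · exact h1
    obtain ⟨k, hk, hk'⟩ := (L_iff hc (hle.trans_lt hlt)).1 h1
    obtain ⟨l, hl, hl'⟩ := (L_iff hc hlt).1 h2
    rcases le_total k l with hkl | hkl
    · have I := ih _ (hc.lt β α hlt l)
      exact I.b n ξ α hle (I.a n _ _ hk' (chain α hlt n k l hkl hl)) hl'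
    · have I := ih _ (hc.lt β α hlt k)
      exact I.b n ξ α hle hk' (I.a n _ _ hl' (chain α hlt n l k hkl hk))
  · intro n
    by_cases hmin : ∃ ξ, ξ < β
    · obtain ⟨ξ₀, hξ₀⟩ := hmin
      have : {ξ | L c n ξ β} ⊆ insert β (⋃ k ∈ Finset.range (n + 1), {ξ | L c n ξ (c β k)}) := by
        intro ξ hξ
        rcases hξ.1.eq_or_lt with rfl | hlt
        · exact mem_insert _ _
        obtain ⟨k, hk, hk'⟩ := (L_iff hc hlt).1 hξ
        refine mem_insert_of_mem _ ?_
        simp only [mem_iUnion, Finset.mem_range]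
        have hk2 : k ≤ nuAt c β k := nu_ge _ _
        exact ⟨k, by omega, hk'⟩
      refine Set.Finite.subset (Set.Finite.insert _ ?_) this
      exact Set.Finite.biUnion (Finset.finite_toSet _) fun k _ => (ih _ (hc.lt β ξ₀ hξ₀ k)).fin n
    · push Not at hmin
      refine (finite_singleton β).subset fun ξ hξ => ?_
      exact le_antisymm hξ.1 (hmin ξ)

/-- Height in the n-th tree. -/
noncomputable def ht (c : Ω → ℕ → Ω) (n : ℕ) (β : Ω) : ℕ := {ξ | L c n ξ β}.ncard

lemma ht_lt {c : Ω → ℕ → Ω} (hc : Ladder c) {n : ℕ} {ξ β : Ω} (h : L c n ξ β) (hlt : ξ < β) :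
    ht c n ξ < ht c n β := by
  refine ncard_lt_ncard ⟨fun ζ hζ => (inv hc β).a n _ _ hζ h, fun hcon => ?_⟩ ((inv hc β).fin n)
  have : L c n β ξ := hcon (L_self c n β)
  exact absurd this.1 (not_le.2 hlt)

open Classical in
/-- The points of the gap-like set. -/
noncomputable def pt (c : Ω → ℕ → Ω) (β : Ω) : Cantor := fun i =>
  decide (∃ ξ, ξ < β ∧ L c i.unpair.1 ξ β ∧ ht c i.unpair.1 ξ = i.unpair.2.unpair.1 ∧
    rho c β ξ = i.unpair.2.unpair.2)

/-- The closed sets. -/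
def Fs (c : Ω → ℕ → Ω) (β : Ω) (E : Set Ω) : Set Cantor :=
  {x | ∀ ξ, ξ < β → ξ ∉ E → ∀ n, rho c β ξ ≤ n → ∀ k,
    x (Nat.pair n (Nat.pair (ht c n ξ) k)) = decide (k = rho c β ξ)}

lemma Fs_closed (c : Ω → ℕ → Ω) (β : Ω) (E : Set Ω) : IsClosed (Fs c β E) := by
  simp only [Fs, ofPred_forall]
  refine isClosed_iInter fun ξ => isClosed_iInter fun _ => isClosed_iInter fun _ =>
    isClosed_iInter fun n => isClosed_iInter fun _ => isClosed_iInter fun k => ?_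
  exact isClosed_eq (continuous_apply _) continuous_const

lemma pt_mem {c : Ω → ℕ → Ω} (hc : Ladder c) (β : Ω) : pt c β ∈ Fs c β ∅ := by
  intro ξ hξ _ n hn k
  have hL : L c n ξ β := ⟨hξ.le, hn⟩
  simp only [pt, Nat.unpair_pair, decide_eq_decide]
  constructor
  · rintro ⟨ζ, hζ, hLζ, hht, hk⟩
    rcases lt_trichotomy ζ ξ with h | h | h
    · exact absurd hht (ht_lt hc ((inv hc β).b n _ _ h.le hLζ hL) h).ne
    · rw [← hk, h]
    · exact absurd hht (ht_lt hc ((inv hc β).b n _ _ h.le hL hLζ) h).ne'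
  · intro hk
    exact ⟨ξ, hξ, hL, rfl, hk.symm⟩

lemma Fs_anti {c : Ω → ℕ → Ω} (hc : Ladder c) {β γ : Ω} (h : β ≤ γ) {E : Set Ω} (hE : E.Finite)
    {x : Cantor} (hx : x ∈ Fs c γ E) : ∃ E' : Set Ω, E'.Finite ∧ x ∈ Fs c β E' := by
  let N := rho c γ β
  have hβγ : L c N β γ := ⟨h, le_rfl⟩
  refine ⟨E ∪ ({ξ | L c N ξ β} ∪ {ξ | L c N ξ γ}),
    hE.union (((inv hc β).fin N).union ((inv hc γ).fin N)), ?_⟩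
  intro ξ hξ hξE n hn k
  have h1 : ξ ∉ E := fun h => hξE (Or.inl h)
  have h2 : N < rho c β ξ := by
    by_contra hcon
    exact hξE (Or.inr (Or.inl ⟨hξ.le, not_lt.1 hcon⟩))
  have h3 : N < rho c γ ξ := by
    by_contra hcon
    exact hξE (Or.inr (Or.inr ⟨hξ.le.trans h, not_lt.1 hcon⟩))
  have h4 : rho c γ ξ ≤ rho c β ξ :=
    ((inv hc γ).a (rho c β ξ) ξ β ⟨hξ.le, le_rfl⟩ ⟨h, h2.le⟩).2
  have h5 : rho c β ξ ≤ rho c γ ξ :=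
    ((inv hc γ).b (rho c γ ξ) ξ β hξ.le ⟨hξ.le.trans h, le_rfl⟩ ⟨h, h3.le⟩).2
  have e : rho c β ξ = rho c γ ξ := le_antisymm h5 h4
  rw [e] at hn ⊢
  exact hx ξ (hξ.trans_le h) h1 n hn k

lemma exists_bound [Uncountable Ω] (hI : ∀ β : Ω, (Iio β).Countable) {D : Set Ω}
    (hD : D.Countable) : ∃ β, ∀ d ∈ D, d < β := by
  by_contra hcon
  push Not at hcon
  have : (univ : Set Ω) ⊆ ⋃ d ∈ D, insert d (Iio d) := by
    intro β _
    obtain ⟨d, hd, hle⟩ := hcon β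
    simp only [mem_iUnion]
    exact ⟨d, hd, hle.eq_or_lt⟩
  exact not_countable_univ ((hD.biUnion fun d _ => (hI d).insert d).mono this)

lemma Fs_empty [Uncountable Ω] (hI : ∀ β : Ω, (Iio β).Countable) {c : Ω → ℕ → Ω} (hc : Ladder c)
    (x : Cantor) : ∃ β, ∀ E : Set Ω, E.Finite → x ∉ Fs c β E := by
  by_contra hcon
  push Not at hcon
  choose E hE hx using hcon
  let val : Ω → ℕ → Prop := fun ξ k =>
    ∃ N, ∀ n, N ≤ n → x (Nat.pair n (Nat.pair (ht c n ξ) k)) = true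
  have hval : ∀ β ξ, ξ < β → ξ ∉ E β → ∀ k, val ξ k ↔ k = rho c β ξ := by
    intro β ξ hξ hξE k
    constructor
    · rintro ⟨N, hN⟩
      have h1 := hx β ξ hξ hξE (max N (rho c β ξ)) (le_max_right _ _) k
      rw [hN _ (le_max_left _ _)] at h1
      simpa using h1.symm
    · intro hk
      refine ⟨rho c β ξ, fun n hn => ?_⟩
      rw [hx β ξ hξ hξE n hn k]
      simpa using hk
  classical
  let e : Ω → ℕ := fun ξ => sInf {k | val ξ k}
  have he : ∀ β ξ, ξ < β → ξ ∉ E β → e ξ = rho c β ξ := by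
    intro β ξ hξ hξE
    have : {k | val ξ k} = {rho c β ξ} := by
      ext k
      exact hval β ξ hξ hξE k
    simp only [e, this, csInf_singleton]
  have hfib : ∃ k, (e ⁻¹' {k}).Infinite := by
    by_contra hf
    push Not at hf
    refine not_countable_univ (α := Ω) ((countable_iUnion fun k => (hf k).countable).mono ?_)
    intro ξ _
    exact mem_iUnion.2 ⟨e ξ, rfl⟩
  obtain ⟨k, hk⟩ := hfib
  let T : Set Ω := range (fun n => ((hk.natEmbedding _ n : e ⁻¹' {k}) : Ω))
  have hT : T.Infinite := infinite_range_of_injective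
    (Subtype.val_injective.comp (hk.natEmbedding _).injective)
  have hTk : ∀ ξ ∈ T, e ξ = k := by
    rintro _ ⟨n, rfl⟩
    exact (hk.natEmbedding _ n).2
  obtain ⟨β, hβ⟩ := exists_bound hI (countable_range _ : T.Countable)
  refine (hT.sdiff (hE β)) (((inv hc β).fin k).subset ?_)
  rintro ξ ⟨hξT, hξE⟩
  refine ⟨(hβ ξ hξT).le, ?_⟩
  rw [← he β ξ (hβ ξ hξT) hξE, hTk ξ hξT]

lemma exists_ladder (hI : ∀ β : Ω, (Iio β).Countable) : ∃ c : Ω → ℕ → Ω, Ladder c := by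
  have : ∀ β : Ω, ∃ f : ℕ → Ω, Monotone f ∧ ∀ ξ, ξ < β → (∀ k, f k < β) ∧ ∃ k, ξ ≤ f k := by
    intro β
    by_cases hne : (Iio β).Nonempty
    · obtain ⟨f, hf⟩ := (hI β).exists_eq_range hne
      have hfl : ∀ k, f k < β := fun k => by
        have : f k ∈ Iio β := hf ▸ mem_range_self k
        exact this
      refine ⟨partialSups f, (partialSups f).monotone, fun ξ hξ => ⟨fun k => ?_, ?_⟩⟩
      · induction k with
        | zero => simpa using hfl 0
        | succ k ih =>
          rw [← Order.succ_eq_add_one, partialSups_succ]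
          exact sup_lt_iff.2 ⟨ih, hfl _⟩
      · have : ξ ∈ range f := hf ▸ hξ
        obtain ⟨k, rfl⟩ := this
        exact ⟨k, le_partialSups f k⟩
    · exact ⟨fun _ => β, monotone_const, fun ξ hξ => absurd ⟨ξ, hξ⟩ hne⟩
  choose c h1 h2 using this
  exact ⟨c, ⟨fun β ξ h => (h2 β ξ h).1, h1, fun β ξ h => (h2 β ξ h).2⟩⟩

end rho

/-- The smallness property of the complement. -/
def Small (Y : Set Cantor) : Prop := ∀ D : Set Cantor, D.Countable →
  ∃ S : Set (Set Cantor), S.Countable ∧ (∀ F ∈ S, IsClosed F ∧ Disjoint D F) ∧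
    (Y \ ⋃₀ S).Countable

lemma exists_small : ∃ Y : Set Cantor, ¬ Y.Countable ∧ Small Y := by
  let Ω : Type := (Cardinal.aleph 1).ord.ToType
  have hI : ∀ β : Ω, (Iio β).Countable := by
    intro β
    have := Cardinal.mk_Iio_toType_ord_lt β
    rw [← Cardinal.le_aleph0_iff_set_countable]
    exact Order.lt_succ_iff.1 (this.trans_eq Cardinal.succ_aleph0.symm)
  haveI : Uncountable Ω := by
    rw [← Cardinal.aleph0_lt_mk_iff]
    simp [Ω]
  obtain ⟨c, hc⟩ := exists_ladder hI
  have key : ∀ D : Set Cantor, D.Countable → ∃ β, ∀ d ∈ D, ∀ E : Set Ω, E.Finite →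
      d ∉ Fs c β E := by
    intro D hD
    choose f hf using Fs_empty hI hc
    obtain ⟨β, hβ⟩ := exists_bound hI (hD.image f)
    refine ⟨β, fun d hd E hE hdE => ?_⟩
    obtain ⟨E', hE', h⟩ := Fs_anti hc (hβ (f d) ⟨d, hd, rfl⟩).le hE hdE
    exact hf d E' hE' h
  refine ⟨range (pt c), ?_, ?_⟩
  · intro hcount
    obtain ⟨β, hβ⟩ := key _ hcount
    exact hβ _ (mem_range_self β) ∅ finite_empty (pt_mem hc β)
  · intro D hD
    obtain ⟨β, hβ⟩ := key D hD
    haveI : Countable (Iio β) := (hI β).to_subtype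
    refine ⟨range (fun E : Finset (Iio β) => Fs c β (Subtype.val '' (E : Set (Iio β)))),
      countable_range _, ?_, ?_⟩
    · rintro _ ⟨E, rfl⟩
      refine ⟨Fs_closed _ _ _, disjoint_left.2 fun d hd => hβ d hd _ ?_⟩
      exact (E.finite_toSet).image _
    · refine ((hI β).image (pt c)).mono ?_
      rintro _ ⟨⟨γ, rfl⟩, hγ⟩
      by_cases hlt : γ < β
      · exact ⟨γ, hlt, rfl⟩
      exfalso
      apply hγ
      obtain ⟨E, hE, hmem⟩ := Fs_anti hc (not_lt.1 hlt) finite_empty (pt_mem hc γ)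
      have hE2 : (Subtype.val ⁻¹' E : Set (Iio β)).Finite :=
        hE.preimage Subtype.val_injective.injOn
      refine ⟨_, ⟨hE2.toFinset, rfl⟩, ?_⟩
      intro ξ hξ hξE
      refine hmem ξ hξ fun h => hξE ?_
      exact ⟨⟨ξ, hξ⟩, by simpa using h, rfl⟩

/-- Flipping finitely many coordinates. -/
def flip (t : Finset ℕ) (x : Cantor) : Cantor := fun i => if i ∈ t then !(x i) else x i

lemma flip_continuous (t : Finset ℕ) : Continuous (flip t) := by
  apply continuous_of_ag
  intro x n
  refine ⟨n + 1, fun y hy => ?_⟩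
  simp only [flip, hy n (by omega)]

lemma flip_FE (t : Finset ℕ) (x : Cantor) : FE (flip t x) x := by
  refine ⟨t.sup id + 1, fun i hi => ?_⟩
  have : i ∉ t := fun h => by
    have : i ≤ t.sup id := Finset.le_sup (f := id) h
    omega
  simp [flip, this]

lemma exists_flip {x y : Cantor} (h : FE x y) : ∃ t, flip t x = y := by
  obtain ⟨N, hN⟩ := h
  refine ⟨(Finset.range N).filter (fun i => x i ≠ y i), ?_⟩
  funext i
  by_cases h : x i = y i
  · simp [flip, h]
  · have : i < N := by
      by_contra hc
      exact h (hN i (by omega))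
    simp only [flip, Finset.mem_filter, Finset.mem_range, this, true_and, ne_eq, h,
      not_false_eq_true, if_true]
    revert h
    cases x i <;> cases y i <;> simp

lemma small_FE {Y : Set Cantor} (hY : Small Y) : Small {x | ∃ y ∈ Y, FE x y} := by
  intro D hD
  obtain ⟨S, hS, hF, hc⟩ := hY _ (countable_FE D hD)
  refine ⟨⋃ t : Finset ℕ, (fun F => flip t ⁻¹' F) '' S, countable_iUnion fun t => hS.image _,
    ?_, ?_⟩
  · intro F hFm
    obtain ⟨t, F, hFS, rfl⟩ := mem_iUnion.1 hFm
    refine ⟨(hF F hFS).1.preimage (flip_continuous t), disjoint_left.2 fun d hd hdF => ?_⟩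
    exact disjoint_left.1 (hF F hFS).2 ⟨d, hd, flip_FE t d⟩ hdF
  · refine (countable_FE _ hc).mono ?_
    rintro x ⟨⟨y, hy, hxy⟩, hx⟩
    refine ⟨y, ⟨hy, ?_⟩, hxy⟩
    rintro ⟨F, hFS, hyF⟩
    obtain ⟨t, rfl⟩ := exists_flip hxy
    exact hx ⟨flip t ⁻¹' F, mem_iUnion.2 ⟨t, F, hFS, rfl⟩, hyF⟩

lemma small_CC {Y : Set Cantor} (hY : Small Y) : CC Yᶜ := by
  intro D hD hDc
  obtain ⟨S, hS, hF, hc⟩ := hY D hDc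
  refine ⟨S ∪ singleton '' (Y \ ⋃₀ S), hS.union (hc.image _), ?_, ?_⟩
  · rintro F (h | ⟨y, hy, rfl⟩)
    · exact hF F h
    · refine ⟨isClosed_singleton, ?_⟩
      rw [disjoint_singleton_right]
      exact fun h => hD h hy.1
  · intro y hy
    rw [compl_compl] at hy
    by_cases h : y ∈ ⋃₀ S
    · obtain ⟨F, hFS, hyF⟩ := h
      exact ⟨F, Or.inl hFS, hyF⟩
    · exact ⟨{y}, Or.inr ⟨y, ⟨hy, h⟩, rfl⟩, rfl⟩

lemma not_polish {Y : Set Cantor} (hY : Small Y) (hunc : ¬ Y.Countable) :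
    ¬ PolishSpace (Yᶜ : Set Cantor) := by
  intro hP
  letI : MeasurableSpace Cantor := borel Cantor
  haveI : BorelSpace Cantor := ⟨rfl⟩
  have h1 : MeasurableSet (range (Subtype.val : (Yᶜ : Set Cantor) → Cantor)) :=
    MeasureTheory.measurableSet_range_of_continuous_injective continuous_subtype_val
      Subtype.val_injective
  rw [Subtype.range_coe] at h1
  have h2 : MeasurableSet Y := by simpa using h1.compl
  haveI : PolishSpace Bool :=
    (Continuous.isClosedEmbedding (f := fun b : Bool => if b then (1 : ℝ) else 0)
      continuous_of_discreteTopology (by intro a b; cases a <;> cases b <;> simp)).polishSpace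
  haveI : PolishSpace Cantor := inferInstance
  have hex : ∃ f : (ℕ → Bool) → Cantor, range f ⊆ Y ∧ Continuous f ∧ Function.Injective f := by
    have h3 := h2.isClopenable
    rcases h3 with ⟨t', ht', hpol, hcl, _⟩
    obtain ⟨f, hfY, hfc', hfi⟩ :=
      @IsClosed.exists_nat_bool_injection_of_not_countable Cantor t' hpol Y hcl hunc
    refine ⟨f, hfY, ?_, hfi⟩
    exact continuous_le_rng ht' hfc'
  obtain ⟨f, hfY, hfc, hfi⟩ := hex
  let Q : Set Cantor := {x | ∃ d ∈ ({fun _ => false} : Set Cantor), FE x d}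
  have hQ : Q.Countable := countable_FE _ (countable_singleton _)
  obtain ⟨S, hS, hF, hc⟩ := hY (f '' Q) (hQ.image f)
  let S' : Set (Set Cantor) := S ∪ singleton '' (Y \ ⋃₀ S)
  have hS' : S'.Countable := hS.union (hc.image _)
  haveI : Countable S' := hS'.to_subtype
  have hcl' : ∀ F : S', IsClosed (f ⁻¹' F.1) := by
    rintro ⟨F, h | ⟨y, hy, rfl⟩⟩
    · exact (hF F h).1.preimage hfc
    · exact isClosed_singleton.preimage hfc
  have hcov : ⋃ F : S', f ⁻¹' F.1 = univ := by
    refine eq_univ_of_forall fun x => ?_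
    rw [mem_iUnion]
    by_cases h : f x ∈ ⋃₀ S
    · obtain ⟨F, hFS, hyF⟩ := h
      exact ⟨⟨F, Or.inl hFS⟩, hyF⟩
    · exact ⟨⟨{f x}, Or.inr ⟨f x, ⟨hfY (mem_range_self x), h⟩, rfl⟩⟩, rfl⟩
  obtain ⟨⟨F, hFS'⟩, x, hx⟩ := nonempty_interior_of_iUnion_of_closed hcl' hcov
  obtain ⟨n, hn⟩ := exists_ag_subset isOpen_interior hx
  let z : Bool → Cantor := fun b i => if i < n then x i else if i = n then b else false
  have hz : ∀ b, f (z b) ∈ F := by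
    intro b
    have : z b ∈ interior (f ⁻¹' F) := hn _ (fun i hi => by simp [z, hi])
    have h5 : z b ∈ f ⁻¹' F := interior_subset this
    exact h5
  have hzQ : ∀ b, z b ∈ Q := fun b => by
    refine ⟨_, rfl, n + 1, fun i hi => ?_⟩
    have h1 : ¬ i < n := by omega
    have h2 : i ≠ n := by omega
    simp [z, h1, h2]
  rcases hFS' with h | ⟨y, hy, rfl⟩
  · exact disjoint_left.1 (hF F h).2 ⟨z true, hzQ true, rfl⟩ (hz true)
  · have h1 : f (z true) = f (z false) := (hz true).trans (hz false).symm
    have h2 := congrFun (hfi h1) n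
    simp [z] at h2

end CDHProof

/-- There exists a subspace `X` of the Cantor set `2^ω` such that `X` is not
Polish and `X^ω` is countable dense homogeneous. -/
theorem statement14 :
    ∃ X : Set (ℕ → Bool), ¬ PolishSpace X ∧ IsCDH (ℕ → X) := by
  obtain ⟨Y, hunc, hY⟩ := CDHProof.exists_small
  have hY' := CDHProof.small_FE hY
  refine ⟨{x | ∃ y ∈ Y, CDHProof.FE x y}ᶜ, CDHProof.not_polish hY' ?_, ?_⟩
  · intro hc
    have hsub : Y ⊆ {x | ∃ y ∈ Y, CDHProof.FE x y} :=
      fun y hy => ⟨y, hy, CDHProof.FE.refl y⟩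
    exact hunc (hc.mono hsub)
  · refine CDHProof.cdh_power ?_ (CDHProof.small_CC hY')
    rintro x y hxy hx ⟨w, hw, hyw⟩
    exact hx ⟨w, hw, hxy.trans hyw⟩
end
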